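/- arXiv:1506.02533 — 2 statements merged into one kernel-verified Lean document; each statement's English description precedes it below -/
import Mathlib

section
/- Let n ≥ 2, k ≥ 0, and suppose (n-1)/(2(n+1)) ≥ 1/p ≥ (n-1)/(2(n+1)) - k/n with p < ∞. If ‖F_t u‖_{L²_τ L_x^{2(n+1)/(n-1)}} ≲ ‖u₀‖_{Ḣ^{(n-1)/(2(n+1))}} holds for u = e^{it|∇|}u₀, then ‖u‖_{L^p_x L²_t} ≲ ‖u₀‖_{H^{k + (n-1)/(2(n+1))}}, by Plancherel, Minkowski's inequality, and Sobolev embedding. -/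
open FourierTransform MeasureTheory Real

variable {n : ℕ}

/-- The half-wave propagator `e^{it|∇|}u₀`, defined via the Fourier multiplier
`e^{it|ξ|}`. -/
noncomputable def halfWave (u₀ : SchwartzMap (EuclideanSpace ℝ (Fin n)) ℂ)
    (t : ℝ) : EuclideanSpace ℝ (Fin n) → ℂ :=
  𝓕⁻ (fun ξ => Complex.exp (Complex.I * t * ‖ξ‖) * 𝓕 (⇑u₀) ξ)

/-- Mixed norm `L²_τ L^r_x` of `F : ℝ × ℝⁿ → ℂ`. -/
noncomputable def L2LrNorm (r : ℝ)
    (F : ℝ → EuclideanSpace ℝ (Fin n) → ℂ) : ℝ :=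
  (∫ τ : ℝ, ((∫ x : EuclideanSpace ℝ (Fin n), ‖F τ x‖ ^ r) ^ (2 / r))) ^ (1 / 2 : ℝ)

/-- Mixed norm `L^p_x L²_t` of `u : ℝ × ℝⁿ → ℂ`. -/
noncomputable def LpL2Norm (p : ℝ)
    (u : ℝ → EuclideanSpace ℝ (Fin n) → ℂ) : ℝ :=
  (∫ x : EuclideanSpace ℝ (Fin n), ((∫ t : ℝ, ‖u t x‖ ^ 2) ^ (p / 2))) ^ (1 / p)

/-- Inhomogeneous Sobolev norm `H^s`. -/
noncomputable def HsNorm (s : ℝ) (f : EuclideanSpace ℝ (Fin n) → ℂ) : ℝ :=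
  (∫ ξ : EuclideanSpace ℝ (Fin n), (1 + ‖ξ‖ ^ 2) ^ s * ‖𝓕 f ξ‖ ^ 2) ^ (1 / 2 : ℝ)

/-- Homogeneous Sobolev norm `Ḣ^s`. -/
noncomputable def HdotNorm (s : ℝ) (f : EuclideanSpace ℝ (Fin n) → ℂ) : ℝ :=
  (∫ ξ : EuclideanSpace ℝ (Fin n), ‖ξ‖ ^ (2 * s) * ‖𝓕 f ξ‖ ^ 2) ^ (1 / 2 : ℝ)

section
open Set Filter Topology Metric

abbrev Eu (n : ℕ) := EuclideanSpace ℝ (Fin n)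

/-- surface measure on the unit sphere -/
noncomputable abbrev sig (n : ℕ) : Measure (sphere (0 : Eu n) 1) := (volume : Measure (Eu n)).toSphere

lemma polar_integrable {n : ℕ} {f : Eu n → ℂ} (hf : Integrable f) :
    Integrable (fun q : sphere (0 : Eu n) 1 × Ioi (0 : ℝ) => f (q.2.1 • q.1.1))
      ((sig n).prod (Measure.volumeIoiPow (n - 1))) := by
  have hmp := (volume : Measure (Eu n)).measurePreserving_homeomorphUnitSphereProd
  rw [finrank_euclideanSpace_fin] at hmp
  rw [← hmp.integrable_comp_emb (Homeomorph.measurableEmbedding _)]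
  have : ((fun q : sphere (0 : Eu n) 1 × Ioi (0 : ℝ) => f (q.2.1 • q.1.1)) ∘
      (homeomorphUnitSphereProd (Eu n))) = f ∘ Subtype.val := by
    ext x
    have hx : (x : Eu n) ≠ 0 := x.2
    simp [smul_smul, hx]
  rw [this, ← integrableOn_iff_comap_subtypeVal (by measurability)]
  exact hf.integrableOn

lemma polar_integral {n : ℕ} (hn : 2 ≤ n) {f : Eu n → ℂ} (hf : Integrable f) :
    ∫ x, f x = ∫ ω, ∫ ρ in Ioi (0:ℝ), (ρ : ℂ) ^ (n - 1) * f (ρ • ω.1) ∂(volume) ∂(sig n) := by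
  have hmp := (volume : Measure (Eu n)).measurePreserving_homeomorphUnitSphereProd
  rw [finrank_euclideanSpace_fin] at hmp
  have : Nonempty (Fin n) := ⟨⟨0, by omega⟩⟩
  have h1 : ∫ x, f x = ∫ x : ({(0 : Eu n)}ᶜ : Set (Eu n)), f x.1 ∂((volume : Measure (Eu n)).comap (↑)) := by
    rw [integral_subtype_comap (measurableSet_singleton _).compl f]
    rw [restrict_compl_singleton]
  have h2 := hmp.integral_comp (Homeomorph.measurableEmbedding _)
    (fun q : sphere (0 : Eu n) 1 × Ioi (0 : ℝ) => f (q.2.1 • q.1.1))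
  have h3 : ∀ x : ({(0 : Eu n)}ᶜ : Set (Eu n)), f (((homeomorphUnitSphereProd (Eu n)) x).2.1 •
      ((homeomorphUnitSphereProd (Eu n)) x).1.1) = f x.1 := by
    intro x
    have hx : (x : Eu n) ≠ 0 := x.2
    simp [smul_smul, hx]
  simp only [h3] at h2
  rw [h1, h2, integral_prod _ (polar_integrable hf)]
  congr 1
  ext ω
  simp only [Measure.volumeIoiPow, ENNReal.ofReal]
  rw [integral_withDensity_eq_integral_smul,
    integral_subtype_comap measurableSet_Ioi fun a ↦ Real.toNNReal (a ^ (n - 1)) • f (a • ω.1)]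
  · refine setIntegral_congr_fun measurableSet_Ioi fun x hx ↦ ?_
    rw [NNReal.smul_def, Real.coe_toNNReal _ (pow_nonneg hx.out.le _)]
    simp
  · exact (measurable_subtype_coe.pow_const _).real_toNNReal

/-- rotation invariance of the sphere integral -/
lemma sphere_invariant {n : ℕ} (hn : 2 ≤ n) (R : Eu n ≃ₗᵢ[ℝ] Eu n) {f : Eu n → ℂ}
    (hf : Continuous f) :
    ∫ ω, f (R ω.1) ∂(sig n) = ∫ ω, f ω.1 ∂(sig n) := by
  have : Nonempty (Fin n) := ⟨⟨0, by omega⟩⟩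
  obtain ⟨C, hC⟩ : ∃ C, ∀ x ∈ sphere (0 : Eu n) 1, ‖f x‖ ≤ C :=
    (isCompact_sphere (0 : Eu n) 1).exists_bound_of_continuousOn hf.continuousOn
  have key : ∀ g : Eu n → ℂ, Continuous g → (∀ x ∈ sphere (0 : Eu n) 1, ‖g x‖ ≤ C) →
      ∫ x, (ball (0 : Eu n) 1).indicator (fun x => g (‖x‖⁻¹ • x)) x
        = (∫ ρ in Ioo (0:ℝ) 1, (ρ : ℂ) ^ (n - 1)) * ∫ ω, g ω.1 ∂(sig n) := by
    intro g hg hgC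
    rw [polar_integral hn]
    · rw [← integral_const_mul]
      congr 1
      ext ω
      rw [← integral_mul_const]
      have : Ioo (0:ℝ) 1 = Iio 1 ∩ Ioi 0 := by ext; simp [and_comm]
      rw [this, ← Measure.restrict_restrict measurableSet_Iio,
        ← integral_indicator (s := Iio 1) measurableSet_Iio]
      refine setIntegral_congr_fun measurableSet_Ioi fun x hx ↦ ?_
      have hx0 : (0:ℝ) < x := hx
      have hω : ‖(ω : Eu n)‖ = 1 := by simp
      by_cases h : x < 1
      · simp [indicator, norm_smul, h, abs_of_pos hx0, smul_smul, hx0.ne']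
      · simp [indicator, norm_smul, h, abs_of_pos hx0]
    · rw [integrable_indicator_iff measurableSet_ball]
      refine Measure.integrableOn_of_bounded (M := max C ‖g 0‖) measure_ball_lt_top.ne ?_ ?_
      · refine Measurable.aestronglyMeasurable ?_
        exact hg.measurable.comp (by fun_prop)
      · refine ae_of_all _ fun x => ?_
        by_cases hx : x = 0
        · simp [hx]
        · exact (hgC _ (by simp [norm_smul, hx])).trans (le_max_left _ _)
  have hmul : (∫ ρ in Ioo (0:ℝ) 1, (ρ : ℂ) ^ (n - 1)) ≠ 0 := by
    rw [← integral_Ioc_eq_integral_Ioo, ← intervalIntegral.integral_of_le zero_le_one]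
    have : ∫ ρ in (0:ℝ)..1, (ρ : ℂ) ^ (n - 1) = ((∫ ρ in (0:ℝ)..1, ρ ^ (n - 1) : ℝ) : ℂ) := by
      rw [← intervalIntegral.integral_ofReal]; simp
    rw [this, integral_pow]
    have : (0:ℝ) < ((n - 1 : ℕ) : ℝ) + 1 := by positivity
    rw [Complex.ofReal_ne_zero]
    simp only [one_pow, ne_eq, Nat.add_eq_zero_iff, one_ne_zero, and_false, not_false_eq_true,
      zero_pow, sub_zero]
    positivity
  apply mul_left_cancel₀ hmul
  rw [← key f hf hC, ← key (fun x => f (R x)) (by fun_prop) (by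
    intro x hx; exact hC _ (by simpa using hx))]
  rw [← R.measurePreserving.integral_comp R.toHomeomorph.measurableEmbedding
    ((ball (0 : Eu n) 1).indicator (fun x => f (‖x‖⁻¹ • x)))]
  congr 1
  ext x
  simp [indicator]


lemma hasDerivAt_sphere_integral {n : ℕ} (F F' : ℝ → Eu n → ℂ)
    (hF : Continuous (fun q : ℝ × Eu n => F q.1 q.2))
    (hF' : Continuous (fun q : ℝ × Eu n => F' q.1 q.2))
    (hd : ∀ t x, HasDerivAt (fun s => F s x) (F' t x) t) (t : ℝ) :
    HasDerivAt (fun s => ∫ ω, F s ω.1 ∂(sig n)) (∫ ω, F' t ω.1 ∂(sig n)) t := by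
  obtain ⟨C, hC⟩ : ∃ C, ∀ q ∈ Icc (t-1) (t+1) ×ˢ sphere (0 : Eu n) 1, ‖F' q.1 q.2‖ ≤ C :=
    (isCompact_Icc.prod (isCompact_sphere (0 : Eu n) 1)).exists_bound_of_continuousOn
      hF'.continuousOn
  have hFc : ∀ s, Continuous (fun ω : sphere (0 : Eu n) 1 => F s ω.1) := fun s => by
    exact hF.comp (by fun_prop : Continuous (fun ω : sphere (0 : Eu n) 1 => (s, ω.1)))
  have hFc' : ∀ s, Continuous (fun ω : sphere (0 : Eu n) 1 => F' s ω.1) := fun s => by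
    exact hF'.comp (by fun_prop : Continuous (fun ω : sphere (0 : Eu n) 1 => (s, ω.1)))
  refine (hasDerivAt_integral_of_dominated_loc_of_deriv_le (s := Icc (t-1) (t+1))
    (F' := fun s (ω : sphere (0 : Eu n) 1) => F' s ω.1) (bound := fun _ => C)
    (Icc_mem_nhds (by linarith) (by linarith)) ?_ ?_ ?_ ?_ ?_ ?_).2
  · exact Eventually.of_forall fun s => (hFc s).aestronglyMeasurable
  · exact (hFc t).integrable_of_hasCompactSupport (HasCompactSupport.of_compactSpace _)
  · exact (hFc' t).aestronglyMeasurable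
  · exact ae_of_all _ fun (ω : sphere (0 : Eu n) 1) s hs => hC (s, ω.1) ⟨hs, ω.2⟩
  · exact integrable_const _
  · exact ae_of_all _ fun ω s _ => hd s ω.1

lemma bessel_decay (N : ℕ) (f f' f'' : ℝ → ℝ) (h1 : ∀ r, HasDerivAt f (f' r) r)
    (h2 : ∀ r, HasDerivAt f' (f'' r) r) (ode : ∀ r, 0 < r → r * f'' r = - N * f' r - r * f r) :
    ∃ C, ∀ r, 1 ≤ r → r ^ N * f r ^ 2 ≤ C := by
  set m : ℝ := N / 2 with hm
  set c : ℝ := |m ^ 2 - m| with hc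
  let g : ℝ → ℝ := fun r => f' r + m * f r / r
  let L : ℝ → ℝ := fun r => r ^ N * (f r ^ 2 + g r ^ 2) * exp (c / r)
  have hg : ∀ r, 0 < r → HasDerivAt g (-m * g r / r - f r + (m^2 - m) * f r / r^2) r := by
    intro r hr
    have := (h2 r).add (((h1 r).const_mul m).div (hasDerivAt_id r) hr.ne')
    refine this.congr_deriv ?_
    have h3 := ode r hr
    have h4 : f'' r = (- N * f' r - r * f r) / r := by field_simp; linarith
    have hN : (N : ℝ) = 2 * m := by rw [hm]; ring
    simp only [g, h4, hN, id]
    field_simp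
    ring
  have hL : ∀ r, 0 < r → HasDerivAt L (r ^ N * exp (c / r) *
      (2 * (m^2 - m) * f r * g r - c * (f r ^ 2 + g r ^ 2)) / r ^ 2) r := by
    intro r hr
    have ha := ((h1 r).pow 2).add ((hg r hr).pow 2)
    have hb := (hasDerivAt_pow N r).mul ha
    have hcc := (((hasDerivAt_const r c).div (hasDerivAt_id r) hr.ne')).exp
    refine (hb.mul hcc).congr_deriv ?_
    have hf' : f' r = g r - m * f r / r := by simp only [g]; ring
    have hN : (N : ℝ) = 2 * m := by rw [hm]; ring
    have hpow : (N : ℝ) * r ^ (N - 1) = 2 * m * r ^ N / r := by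
      rcases Nat.eq_zero_or_pos N with h | h
      · have : m = 0 := by rw [hm, h]; simp
        simp [h, this]
      · rw [hN]
        obtain ⟨k, rfl⟩ : ∃ k, N = k + 1 := ⟨N - 1, by omega⟩
        field_simp
        simp only [Nat.add_sub_cancel]
        ring
    simp only [hpow, hf', Pi.add_apply, Pi.pow_apply, Pi.mul_apply, Pi.div_apply, id]
    field_simp
    ring
  have hanti : AntitoneOn L (Ici 1) := by
    refine antitoneOn_of_deriv_nonpos (convex_Ici 1) ?_ ?_ ?_
    · intro r hr
      exact (hL r (by linarith [mem_Ici.1 hr])).continuousAt.continuousWithinAt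
    · intro r hr
      rw [interior_Ici] at hr
      exact (hL r (by linarith [mem_Ioi.1 hr])).differentiableAt.differentiableWithinAt
    · intro r hr
      rw [interior_Ici] at hr
      have hr0 : 0 < r := by linarith [mem_Ioi.1 hr]
      rw [(hL r hr0).deriv]
      apply div_nonpos_of_nonpos_of_nonneg _ (by positivity)
      apply mul_nonpos_of_nonneg_of_nonpos (by positivity)
      have e1 : (m^2 - m) * (f r * g r) ≤ c * |f r * g r| := by
        rw [hc, ← abs_mul]; exact le_abs_self _
      have e2 : 2 * |f r * g r| ≤ f r ^ 2 + g r ^ 2 := by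
        rw [abs_mul]
        nlinarith [sq_nonneg (|f r| - |g r|), sq_abs (f r), sq_abs (g r)]
      have e3 : 0 ≤ c := abs_nonneg _
      nlinarith
  refine ⟨L 1, fun r hr => ?_⟩
  have hr0 : 0 < r := by linarith
  have := hanti (by simp : (1:ℝ) ∈ Ici (1:ℝ)) (mem_Ici.2 hr) hr
  refine le_trans ?_ this
  simp only [L]
  have h5 : 1 ≤ exp (c / r) := one_le_exp (by positivity)
  calc r ^ N * f r ^ 2 ≤ r ^ N * (f r ^ 2 + g r ^ 2) := by
        gcongr; nlinarith [sq_nonneg (g r)]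
    _ ≤ r ^ N * (f r ^ 2 + g r ^ 2) * exp (c / r) := le_mul_of_one_le_right (by positivity) h5

/-- Fourier transform of the surface measure -/
noncomputable def Ksph {n : ℕ} (z : Eu n) : ℂ := ∫ ω, Complex.exp (Complex.I * (inner ℝ z ω.1 : ℝ)) ∂(sig n)

lemma Ksph_norm_eq {n : ℕ} (hn : 2 ≤ n) {z w : Eu n} (h : ‖z‖ = ‖w‖) : Ksph z = Ksph w := by
  have h1 := Submodule.reflection_sub (v := w) (w := z) h.symm
  set R := (Submodule.span ℝ {w - z})ᗮ.reflection with hR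
  have := sphere_invariant hn R (f := fun x => Complex.exp (Complex.I * (inner ℝ z x : ℝ)))
    (by fun_prop)
  unfold Ksph
  rw [← this]
  congr 1
  ext ω
  rw [← h1, R.inner_map_map]

lemma Ksph_bounded {n : ℕ} (z : Eu n) : ‖Ksph z‖ ≤ (sig n).real univ := by
  refine (norm_integral_le_integral_norm _).trans ?_
  have : ∀ ω : sphere (0 : Eu n) 1, ‖Complex.exp (Complex.I * (inner ℝ z ω.1 : ℝ))‖ = 1 := by
    intro ω
    rw [mul_comm]
    exact Complex.norm_exp_ofReal_mul_I _
  simp [this]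

lemma Ksph_identity {n : ℕ} (hn : 2 ≤ n) (i j : Fin n) (hij : i ≠ j) (r : ℝ) :
    ∫ ω, (-(Complex.I * r * (ω.1 i : ℂ)) - r ^ 2 * (ω.1 j : ℂ) ^ 2) * Complex.exp (Complex.I * (r * ω.1 i)) ∂(sig n) = 0 := by
  let F0 : ℝ → Eu n → ℂ := fun t x => Complex.exp (Complex.I * (r * (cos t * x i + sin t * x j) : ℝ))
  let F1 : ℝ → Eu n → ℂ := fun t x => (Complex.I * (r * (-sin t * x i + cos t * x j) : ℝ)) *
    Complex.exp (Complex.I * (r * (cos t * x i + sin t * x j) : ℝ))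
  let F2 : ℝ → Eu n → ℂ := fun t x => ((Complex.I * (r * (-cos t * x i - sin t * x j) : ℝ)) +
     (Complex.I * (r * (-sin t * x i + cos t * x j) : ℝ)) ^ 2) *
    Complex.exp (Complex.I * (r * (cos t * x i + sin t * x j) : ℝ))
  have hreal1 : ∀ t (x : Eu n), HasDerivAt (fun t : ℝ => r * (cos t * x i + sin t * x j)) (r * (-sin t * x i + cos t * x j)) t := by
    intro t x
    exact (((hasDerivAt_cos t).mul_const _).add ((hasDerivAt_sin t).mul_const _)).const_mul r
  have hreal2 : ∀ t (x : Eu n), HasDerivAt (fun t : ℝ => r * (-sin t * x i + cos t * x j)) (r * (-cos t * x i - sin t * x j)) t := by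
    intro t x
    refine ((((hasDerivAt_sin t).neg.mul_const _).add ((hasDerivAt_cos t).mul_const _)).const_mul r).congr_deriv ?_
    ring
  have hd0 : ∀ t x, HasDerivAt (fun s => F0 s x) (F1 t x) t := by
    intro t x
    refine (((hreal1 t x).ofReal_comp).const_mul Complex.I).cexp.congr_deriv ?_
    simp only [F1]; ring
  have hd1 : ∀ t x, HasDerivAt (fun s => F1 s x) (F2 t x) t := by
    intro t x
    refine ((((hreal2 t x).ofReal_comp).const_mul Complex.I).mul (hd0 t x)).congr_deriv ?_
    simp only [F1, F2, F0]; ring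
  have hc0 : Continuous (fun q : ℝ × Eu n => F0 q.1 q.2) := by simp only [F0]; fun_prop
  have hc1 : Continuous (fun q : ℝ × Eu n => F1 q.1 q.2) := by simp only [F1]; fun_prop
  have hc2 : Continuous (fun q : ℝ × Eu n => F2 q.1 q.2) := by simp only [F2]; fun_prop
  have D0 := hasDerivAt_sphere_integral F0 F1 hc0 hc1 hd0
  have D1 := hasDerivAt_sphere_integral F1 F2 hc1 hc2 hd1
  have hconst : ∀ t, ∫ ω, F0 t ω.1 ∂(sig n) = ∫ ω, F0 0 ω.1 ∂(sig n) := by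
    intro t
    have e : ∀ t, ∫ ω, F0 t ω.1 ∂(sig n) = Ksph ((r * cos t) • EuclideanSpace.single i (1:ℝ) +
        (r * sin t) • EuclideanSpace.single j (1:ℝ)) := by
      intro t
      unfold Ksph
      congr 1
      ext ω
      simp only [F0, inner_add_left, inner_smul_left, EuclideanSpace.inner_single_left]
      congr 3
      simp
      ring
    rw [e, e]
    apply Ksph_norm_eq hn
    rw [← sq_eq_sq₀ (norm_nonneg _) (norm_nonneg _), ← real_inner_self_eq_norm_sq, ← real_inner_self_eq_norm_sq]
    simp only [inner_add_left, inner_add_right, inner_smul_left, inner_smul_right,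
      EuclideanSpace.inner_single_left]
    simp [hij, hij.symm]
    nlinarith [sin_sq_add_cos_sq t]
  have hz1 : ∀ t, ∫ ω, F1 t ω.1 ∂(sig n) = 0 := by
    intro t
    have := D0 t
    simp only [hconst] at this
    exact this.unique (hasDerivAt_const t _)
  have hz2 : ∫ ω, F2 0 ω.1 ∂(sig n) = 0 := by
    have := D1 0
    simp only [hz1] at this
    exact this.unique (hasDerivAt_const _ _)
  rw [← hz2]
  congr 1
  ext ω
  simp only [F2, cos_zero, sin_zero]
  push_cast
  rw [show Complex.I * (↑r * (1 * ((ω.1 i : ℝ) : ℂ) + 0 * ((ω.1 j : ℝ) : ℂ))) = Complex.I * (r * ω.1 i) by ring]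
  congr 1
  linear_combination (-(r:ℂ)^2 * ((ω.1 j : ℝ) : ℂ)^2) * Complex.I_sq

lemma Ksph_decay {n : ℕ} (hn : 2 ≤ n) :
    ∃ C, 0 < C ∧ ∀ z : Eu n, ‖Ksph z‖ ≤ C * (1 + ‖z‖) ^ (-(((n : ℝ) - 1) / 2)) := by
  let i : Fin n := ⟨0, by omega⟩
  let f : ℝ → ℂ := fun r => ∫ ω, Complex.exp (Complex.I * (r * ω.1 i)) ∂(sig n)
  let f1 : ℝ → ℂ := fun r => ∫ ω, (Complex.I * ω.1 i) * Complex.exp (Complex.I * (r * ω.1 i)) ∂(sig n)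
  let f2 : ℝ → ℂ := fun r => ∫ ω, (Complex.I * ω.1 i) ^ 2 * Complex.exp (Complex.I * (r * ω.1 i)) ∂(sig n)
  have hexp : ∀ (r : ℝ) (x : Eu n), HasDerivAt (fun r : ℝ => Complex.exp (Complex.I * (r * x i)))
      ((Complex.I * x i) * Complex.exp (Complex.I * (r * x i))) r := by
    intro r x
    refine (((hasDerivAt_id r).ofReal_comp.mul_const (x i : ℂ)).const_mul Complex.I).cexp.congr_deriv ?_
    simp; ring
  have hf : ∀ r, HasDerivAt f (f1 r) r := fun r =>
    hasDerivAt_sphere_integral (n := n) (fun r x => Complex.exp (Complex.I * (r * x i)))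
      (fun r x => (Complex.I * x i) * Complex.exp (Complex.I * (r * x i))) (by fun_prop) (by fun_prop)
      hexp r
  have hf1 : ∀ r, HasDerivAt f1 (f2 r) r := fun r =>
    hasDerivAt_sphere_integral (n := n) (fun r x => (Complex.I * x i) * Complex.exp (Complex.I * (r * x i)))
      (fun r x => (Complex.I * x i) ^ 2 * Complex.exp (Complex.I * (r * x i))) (by fun_prop) (by fun_prop)
      (fun t x => ((hexp t x).const_mul _).congr_deriv (by ring)) r
  have hint : ∀ g : Eu n → ℂ, Continuous g → Integrable (fun ω : sphere (0 : Eu n) 1 => g ω.1) (sig n) :=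
    fun g hg => (by fun_prop : Continuous fun ω : sphere (0 : Eu n) 1 => g ω.1).integrable_of_hasCompactSupport
      (HasCompactSupport.of_compactSpace _)
  have hode : ∀ r : ℝ, 0 < r → r * f2 r = - ((n - 1 : ℕ) : ℂ) * f1 r - r * f r := by
    intro r hr
    have hsum : ∑ j ∈ Finset.univ.erase i, ∫ ω, (-(Complex.I * r * (ω.1 i : ℂ)) - r ^ 2 * (ω.1 j : ℂ) ^ 2) * Complex.exp (Complex.I * (r * ω.1 i)) ∂(sig n) = 0 :=
      Finset.sum_eq_zero fun j hj => Ksph_identity hn i j (Finset.ne_of_mem_erase hj).symm r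
    rw [← integral_finsetSum] at hsum
    swap
    · intro j _
      exact hint (fun x => (-(Complex.I * r * (x i : ℂ)) - r ^ 2 * (x j : ℂ) ^ 2) * Complex.exp (Complex.I * (r * x i))) (by fun_prop)
    have e : ∀ ω : sphere (0 : Eu n) 1, ∑ j ∈ Finset.univ.erase i, (-(Complex.I * r * (ω.1 i : ℂ)) - r ^ 2 * (ω.1 j : ℂ) ^ 2) * Complex.exp (Complex.I * (r * ω.1 i))
      = (-(r : ℂ)) * (((n - 1 : ℕ) : ℂ) * ((Complex.I * ω.1 i) * Complex.exp (Complex.I * (r * ω.1 i)))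
        + r * Complex.exp (Complex.I * (r * ω.1 i)) + r * ((Complex.I * ω.1 i) ^ 2 * Complex.exp (Complex.I * (r * ω.1 i)))) := by
      intro ω
      have hω : ‖(ω : Eu n)‖ = 1 := by simp
      have h1 : ∑ j, (ω.1 j) ^ 2 = 1 := by
        rw [← EuclideanSpace.real_norm_sq_eq, hω]; norm_num
      rw [← Finset.add_sum_erase _ _ (Finset.mem_univ i)] at h1
      have h2 : ((ω.1 i : ℝ) : ℂ) ^ 2 + ∑ j ∈ Finset.univ.erase i, ((ω.1 j : ℝ) : ℂ) ^ 2 = 1 := by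
        exact_mod_cast congrArg (fun x : ℝ => (x : ℂ)) h1
      rw [← Finset.sum_mul, Finset.sum_sub_distrib, ← Finset.mul_sum, Finset.sum_const,
        Finset.card_erase_of_mem (Finset.mem_univ i), Finset.card_univ, Fintype.card_fin, nsmul_eq_mul]
      linear_combination (-(r:ℂ)^2 * Complex.exp (Complex.I * (r * ω.1 i))) * h2 + (r:ℂ)^2 * ((ω.1 i : ℝ) : ℂ)^2 * Complex.exp (Complex.I * (r * ω.1 i)) * Complex.I_sq
    simp only [e] at hsum
    rw [integral_const_mul, integral_add, integral_add, integral_const_mul, integral_const_mul, integral_const_mul] at hsum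
    · have hr' : (-(r:ℂ)) ≠ 0 := by simpa using hr.ne'
      have := (mul_eq_zero.1 hsum).resolve_left hr'
      change _ * f1 r + r * f r + r * f2 r = 0 at this
      linear_combination this
    · exact hint (fun x => ((n - 1 : ℕ) : ℂ) * ((Complex.I * x i) * Complex.exp (Complex.I * (r * x i)))) (by fun_prop)
    · exact hint (fun x => r * Complex.exp (Complex.I * (r * x i))) (by fun_prop)
    · exact hint (fun x => ((n - 1 : ℕ) : ℂ) * ((Complex.I * x i) * Complex.exp (Complex.I * (r * x i))) + r * Complex.exp (Complex.I * (r * x i))) (by fun_prop)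
    · exact hint (fun x => r * ((Complex.I * x i) ^ 2 * Complex.exp (Complex.I * (r * x i)))) (by fun_prop)
  obtain ⟨C1, hC1⟩ := bessel_decay (n - 1) (fun r => (f r).re) (fun r => (f1 r).re) (fun r => (f2 r).re)
    (fun r => Complex.reCLM.hasFDerivAt.comp_hasDerivAt r (hf r))
    (fun r => Complex.reCLM.hasFDerivAt.comp_hasDerivAt r (hf1 r))
    (fun r hr => by
      have := congrArg Complex.re (hode r hr)
      simpa [-Nat.cast_pred, Complex.mul_re] using this)
  obtain ⟨C2, hC2⟩ := bessel_decay (n - 1) (fun r => (f r).im) (fun r => (f1 r).im) (fun r => (f2 r).im)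
    (fun r => Complex.imCLM.hasFDerivAt.comp_hasDerivAt r (hf r))
    (fun r => Complex.imCLM.hasFDerivAt.comp_hasDerivAt r (hf1 r))
    (fun r hr => by
      have := congrArg Complex.im (hode r hr)
      simpa [-Nat.cast_pred, Complex.mul_im] using this)
  have hKf : ∀ z : Eu n, Ksph z = f ‖z‖ := by
    intro z
    rw [Ksph_norm_eq hn (w := ‖z‖ • EuclideanSpace.single i (1:ℝ)) (by simp [norm_smul])]
    unfold Ksph
    simp only [f]
    congr 1
    ext ω
    simp only [inner_smul_left, EuclideanSpace.inner_single_left]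
    simp
  set S := (sig n).real univ
  have hS : 0 ≤ S := measureReal_nonneg
  have hn1 : (1:ℝ) ≤ n := by exact_mod_cast (by omega : 1 ≤ n)
  set m : ℝ := ((n:ℝ) - 1) / 2 with hm
  have hm0 : 0 ≤ m := by rw [hm]; linarith
  have hC : ∀ r, 1 ≤ r → ‖f r‖ ≤ √(|C1| + |C2|) * r ^ (-m) := by
    intro r hr
    have hr0 : 0 < r := by linarith
    have h1 : r ^ (n-1) * ‖f r‖ ^ 2 ≤ |C1| + |C2| := by
      rw [← Complex.normSq_eq_norm_sq, Complex.normSq_apply]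
      have a := hC1 r hr
      have b := hC2 r hr
      nlinarith [le_abs_self C1, le_abs_self C2]
    have h2 : r ^ (n-1) = (r ^ m) ^ 2 := by
      rw [← rpow_natCast, ← rpow_natCast, ← rpow_mul hr0.le, hm]
      congr 1
      push_cast [Nat.cast_sub (by omega : 1 ≤ n)]
      ring
    rw [h2, ← mul_pow] at h1
    have h3 := abs_le_sqrt h1
    rw [abs_of_nonneg (by positivity)] at h3
    rw [rpow_neg hr0.le]
    field_simp
    linarith
  refine ⟨2 ^ m * (S + √(|C1| + |C2|) + 1), by positivity, fun z => ?_⟩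
  have hz := norm_nonneg z
  rw [rpow_neg (by positivity), ← div_eq_mul_inv, le_div_iff₀ (by positivity)]
  by_cases h : 1 ≤ ‖z‖
  · have h1 : (1 + ‖z‖) ^ m ≤ 2 ^ m * ‖z‖ ^ m := by
      rw [← mul_rpow (by norm_num) (by positivity)]
      exact rpow_le_rpow (by positivity) (by linarith) hm0
    have h2 := hC _ h
    rw [← hKf] at h2
    have hp : 0 < ‖z‖ ^ m := by positivity
    calc ‖Ksph z‖ * (1 + ‖z‖) ^ m ≤ (√(|C1| + |C2|) * ‖z‖ ^ (-m)) * (2 ^ m * ‖z‖ ^ m) := by gcongr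
      _ = 2 ^ m * √(|C1| + |C2|) := by
        rw [rpow_neg hz]; field_simp
      _ ≤ _ := by gcongr; linarith
  · have h1 : (1 + ‖z‖) ^ m ≤ 2 ^ m := rpow_le_rpow (by positivity) (by linarith) hm0
    calc ‖Ksph z‖ * (1 + ‖z‖) ^ m ≤ S * 2 ^ m := by gcongr; exact Ksph_bounded z
      _ ≤ _ := by
        rw [mul_comm]; gcongr; linarith [sqrt_nonneg (|C1| + |C2|)]


lemma integrable_w : Integrable (fun r : ℝ => (1 + ‖r‖) ^ (-2 : ℝ)) :=
  integrable_one_add_norm (by simp)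

lemma tendsto_w : Tendsto (fun r : ℝ => (1 + ‖r‖) ^ (-2 : ℝ)) atTop (𝓝 0) := by
  have h1 : Tendsto (fun r : ℝ => 1 + ‖r‖) atTop atTop :=
    tendsto_atTop_add_const_left _ _ tendsto_norm_atTop_atTop
  exact (tendsto_rpow_neg_atTop (by norm_num : (0:ℝ) < 2)).comp h1

lemma byparts_aux (g0 g1 : ℝ → ℂ) (C : ℝ) (h0 : ∀ r, HasDerivAt g0 (g1 r) r)
    (hc1 : Continuous g1)
    (b0 : ∀ r, 0 ≤ r → ‖g0 r‖ ≤ C * (1 + ‖r‖) ^ (-2 : ℝ))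
    (b1 : ∀ r, 0 ≤ r → ‖g1 r‖ ≤ C * (1 + ‖r‖) ^ (-2 : ℝ)) (t : ℝ) :
    (Complex.I * t) * ∫ r in Ioi (0:ℝ), Complex.exp (Complex.I * t * r) * g0 r
      = - g0 0 - ∫ r in Ioi (0:ℝ), Complex.exp (Complex.I * t * r) * g1 r := by
  have hc0 : Continuous g0 := continuous_iff_continuousAt.2 fun r => (h0 r).continuousAt
  have hn : ∀ r : ℝ, ‖Complex.exp (Complex.I * t * r)‖ = 1 := by
    intro r
    rw [show Complex.I * t * r = ((t * r : ℝ) : ℂ) * Complex.I by push_cast; ring]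
    exact Complex.norm_exp_ofReal_mul_I _
  have hint : ∀ g : ℝ → ℂ, Continuous g → (∀ r, 0 ≤ r → ‖g r‖ ≤ C * (1 + ‖r‖) ^ (-2 : ℝ)) →
      IntegrableOn (fun r : ℝ => Complex.exp (Complex.I * t * r) * g r) (Ioi 0) := by
    intro g hg hb
    refine Integrable.mono' ((integrable_w.const_mul C).integrableOn (s := Ioi 0))
      (by fun_prop) ?_
    rw [ae_restrict_iff' measurableSet_Ioi]
    refine ae_of_all _ fun r hr => ?_
    rw [norm_mul, hn, one_mul]
    exact hb r (le_of_lt hr)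
  have hE : ∀ r : ℝ, HasDerivAt (fun r : ℝ => Complex.exp (Complex.I * t * r))
      (Complex.I * t * Complex.exp (Complex.I * t * r)) r := by
    intro r
    refine (((hasDerivAt_id r).ofReal_comp).const_mul (Complex.I * t)).cexp.congr_deriv ?_
    simp; ring
  have key := integral_Ioi_mul_deriv_eq_deriv_mul (a := 0) (u := g0) (u' := g1)
    (v := fun r : ℝ => Complex.exp (Complex.I * t * r))
    (v' := fun r : ℝ => Complex.I * t * Complex.exp (Complex.I * t * r)) (a' := g0 0) (b' := 0)
    (fun r _ => h0 r) (fun r _ => hE r) ?_ ?_ ?_ ?_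
  · rw [← integral_const_mul]
    rw [zero_sub] at key
    refine Eq.trans ?_ (key.trans ?_)
    · congr 1; ext r; ring
    · congr 2; ext r; ring
  · refine ((hint g0 hc0 b0).const_mul (Complex.I * t)).congr (ae_of_all _ fun r => ?_)
    simp only [Pi.mul_apply]; ring
  · refine ((hint g1 hc1 b1)).congr (ae_of_all _ fun r => ?_)
    simp only [Pi.mul_apply]; ring
  · have : Continuous (g0 * fun r : ℝ => Complex.exp (Complex.I * t * r)) := by fun_prop
    have h := (this.tendsto 0).mono_left (nhdsWithin_le_nhds (s := Ioi 0))
    simpa using h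
  · refine squeeze_zero_norm' (a := fun r : ℝ => C * (1 + ‖r‖) ^ (-2 : ℝ)) ?_ ?_
    · filter_upwards [eventually_ge_atTop 0] with r hr
      simp only [Pi.mul_apply, norm_mul, hn, mul_one]
      exact b0 r hr
    · simpa using tendsto_w.const_mul C

lemma halfline_fourier_bound (g0 g1 g2 : ℝ → ℂ) (C : ℝ)
    (h0 : ∀ r, HasDerivAt g0 (g1 r) r) (h1 : ∀ r, HasDerivAt g1 (g2 r) r)
    (hc2 : Continuous g2) (hz : g0 0 = 0)
    (b0 : ∀ r, 0 ≤ r → ‖g0 r‖ ≤ C * (1 + ‖r‖) ^ (-2 : ℝ))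
    (b1 : ∀ r, 0 ≤ r → ‖g1 r‖ ≤ C * (1 + ‖r‖) ^ (-2 : ℝ))
    (b2 : ∀ r, 0 ≤ r → ‖g2 r‖ ≤ C * (1 + ‖r‖) ^ (-2 : ℝ)) (t : ℝ) :
    ‖∫ r in Ioi (0:ℝ), Complex.exp (Complex.I * t * r) * g0 r‖ ≤
      (C + 2 * (C * ∫ r in Ioi (0:ℝ), (1 + ‖r‖) ^ (-2 : ℝ))) / (1 + t ^ 2) := by
  have hc1 : Continuous g1 := continuous_iff_continuousAt.2 fun r => (h1 r).continuousAt
  have e1 := byparts_aux g0 g1 C h0 hc1 b0 b1 t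
  have e2 := byparts_aux g1 g2 C h1 hc2 b1 b2 t
  have hn : ∀ r : ℝ, ‖Complex.exp (Complex.I * t * r)‖ = 1 := by
    intro r
    rw [show Complex.I * t * r = ((t * r : ℝ) : ℂ) * Complex.I by push_cast; ring]
    exact Complex.norm_exp_ofReal_mul_I _
  have hb : ∀ g : ℝ → ℂ, (∀ r, 0 ≤ r → ‖g r‖ ≤ C * (1 + ‖r‖) ^ (-2 : ℝ)) →
      ‖∫ r in Ioi (0:ℝ), Complex.exp (Complex.I * t * r) * g r‖ ≤
        C * ∫ r in Ioi (0:ℝ), (1 + ‖r‖) ^ (-2 : ℝ) := by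
    intro g hg
    rw [← integral_const_mul]
    refine norm_integral_le_of_norm_le ((integrable_w.const_mul C).integrableOn) ?_
    rw [ae_restrict_iff' measurableSet_Ioi]
    refine ae_of_all _ fun r hr => ?_
    rw [norm_mul, hn, one_mul]
    exact hg r (le_of_lt hr)
  set J := ∫ r in Ioi (0:ℝ), Complex.exp (Complex.I * t * r) * g0 r
  set J2 := ∫ r in Ioi (0:ℝ), Complex.exp (Complex.I * t * r) * g2 r
  have e3 : (t : ℂ) ^ 2 * J = -(g1 0 + J2) := by
    rw [hz] at e1
    linear_combination (-(Complex.I * t)) * e1 + e2 + (t:ℂ)^2 * J * Complex.I_sq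
  have e4 : t ^ 2 * ‖J‖ ≤ C + C * ∫ r in Ioi (0:ℝ), (1 + ‖r‖) ^ (-2 : ℝ) := by
    have : t ^ 2 * ‖J‖ = ‖(t:ℂ) ^ 2 * J‖ := by
      rw [norm_mul, norm_pow, Complex.norm_real, norm_eq_abs, sq_abs]
    rw [this, e3, norm_neg]
    refine (norm_add_le _ _).trans ?_
    have := b1 0 le_rfl
    simp at this
    exact add_le_add this (hb g2 b2)
  rw [le_div_iff₀ (by positivity)]
  have := hb g0 b0
  change ‖J‖ ≤ _ at this
  nlinarith

lemma schwartz_bound {n : ℕ} {F : Type*} [NormedAddCommGroup F] [NormedSpace ℝ F]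
    (f : SchwartzMap (Eu n) F) (k : ℕ) :
    ∃ C, 0 ≤ C ∧ ∀ x, (1 + ‖x‖) ^ k * ‖f x‖ ≤ C := by
  refine ⟨2 ^ k * (Finset.Iic (k, 0)).sup (fun m => SchwartzMap.seminorm ℝ m.1 m.2) f, by positivity,
    fun x => ?_⟩
  simpa using SchwartzMap.one_add_le_sup_seminorm_apply (𝕜 := ℝ) (m := (k, 0)) (k := k) (n := 0) le_rfl le_rfl f x

/-- bounds for `ρ ^ j * f (ρ ω)` -/
lemma radial_bound {n : ℕ} {F : Type*} [NormedAddCommGroup F] [NormedSpace ℝ F]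
    (f : SchwartzMap (Eu n) F) (N : ℕ) :
    ∃ C, 0 ≤ C ∧ ∀ j ≤ N, ∀ r : ℝ, 0 ≤ r → ∀ ω : sphere (0 : Eu n) 1,
      r ^ j * ‖f (r • ω.1)‖ ≤ C * (1 + ‖r‖) ^ (-2 : ℝ) := by
  obtain ⟨C, hC, h⟩ := schwartz_bound f (N + 2)
  refine ⟨C, hC, fun j hj r hr ω => ?_⟩
  have hω : ‖(ω : Eu n)‖ = 1 := by simp
  have h1 := h (r • ω.1)
  rw [norm_smul, hω, mul_one, norm_of_nonneg hr] at h1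
  rw [norm_of_nonneg hr, rpow_neg (by positivity), ← div_eq_mul_inv, le_div_iff₀ (by positivity)]
  have h2 : r ^ j ≤ (1 + r) ^ N :=
    (pow_le_pow_left₀ hr (by linarith) j).trans (pow_le_pow_right₀ (by linarith) hj)
  calc r ^ j * ‖f (r • ω.1)‖ * (1 + r) ^ (2:ℝ) = r ^ j * ((1 + r) ^ 2 * ‖f (r • ω.1)‖) := by
        norm_cast; ring
    _ ≤ (1 + r) ^ N * ((1 + r) ^ 2 * ‖f (r • ω.1)‖) := by gcongr
    _ = (1 + r) ^ (N + 2) * ‖f (r • ω.1)‖ := by ring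
    _ ≤ C := h1

/-- integral of a function over the dilated sphere -/
noncomputable def Asph {n : ℕ} (φ : Eu n → ℂ) (ρ : ℝ) : ℂ := ∫ ω, φ (ρ • ω.1) ∂(sig n)

lemma polar_wave {n : ℕ} (hn : 2 ≤ n) (φ : SchwartzMap (Eu n) ℂ) (t : ℝ) :
    ∫ ξ, Complex.exp (Complex.I * t * ‖ξ‖) * φ ξ =
      ∫ ω, ∫ ρ in Ioi (0:ℝ), Complex.exp (Complex.I * t * ρ) * ((ρ : ℂ) ^ (n - 1) * φ (ρ • ω.1)) ∂(volume) ∂(sig n) := by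
  rw [polar_integral hn]
  · congr 1
    ext ω
    refine setIntegral_congr_fun measurableSet_Ioi fun x hx ↦ ?_
    have hx0 : (0:ℝ) < x := hx
    have hω : ‖(ω : Eu n)‖ = 1 := by simp
    simp only [norm_smul, hω, mul_one, norm_of_nonneg hx0.le]
    ring
  · refine φ.integrable.norm.mono' (by fun_prop) (ae_of_all _ fun ξ => ?_)
    rw [norm_mul, show Complex.I * t * (‖ξ‖:ℂ) = ((t * ‖ξ‖ : ℝ) : ℂ) * Complex.I by push_cast; ring,
      Complex.norm_exp_ofReal_mul_I, one_mul]

set_option maxHeartbeats 1600000 in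
lemma wave_decay {n : ℕ} (hn : 2 ≤ n) (φ : SchwartzMap (Eu n) ℂ) :
    ∃ C, ∀ t : ℝ, ‖∫ ξ, Complex.exp (Complex.I * t * ‖ξ‖) * φ ξ‖ ≤ C / (1 + t ^ 2) := by
  obtain ⟨N, rfl⟩ : ∃ N, n = N + 2 := ⟨n - 2, by omega⟩
  obtain ⟨φ1, hd1⟩ : ∃ φ1 : SchwartzMap (Eu (N+2)) (Eu (N+2) →L[ℝ] ℂ),
      ∀ x, HasFDerivAt φ (φ1 x) x :=
    ⟨SchwartzMap.fderivCLM ℝ (Eu (N+2)) ℂ φ, fun x => φ.differentiableAt.hasFDerivAt⟩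
  obtain ⟨φ2, hd2⟩ : ∃ φ2 : SchwartzMap (Eu (N+2)) (Eu (N+2) →L[ℝ] Eu (N+2) →L[ℝ] ℂ),
      ∀ x, HasFDerivAt φ1 (φ2 x) x :=
    ⟨SchwartzMap.fderivCLM ℝ (Eu (N+2)) _ φ1, fun x => φ1.differentiableAt.hasFDerivAt⟩
  obtain ⟨C0, hC0, h0⟩ := radial_bound φ (N + 1)
  obtain ⟨C1, hC1, h1⟩ := radial_bound φ1 (N + 1)
  obtain ⟨C2, hC2, h2⟩ := radial_bound φ2 (N + 1)
  set M : ℝ := (N + 1) * N * C0 + 2 * ((N + 1) * C1) + C2 + (N + 1) * C0 + C1 + C0 with hM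
  set D : ℝ := (M + 2 * (M * ∫ r in Ioi (0:ℝ), (1 + ‖r‖) ^ (-2 : ℝ)))
  refine ⟨D * (sig (N+2)).real univ, fun t => ?_⟩
  rw [polar_wave hn, mul_div_right_comm]
  refine norm_integral_le_of_norm_le_const (ae_of_all _ fun ω => ?_)
  have hω : ‖(ω : Eu (N+2))‖ = 1 := by simp
  have hline : ∀ r : ℝ, HasDerivAt (fun r : ℝ => r • ω.1) ω.1 r := fun r => by
    simpa using (hasDerivAt_id r).smul_const ω.1
  have hφ : ∀ r : ℝ, HasDerivAt (fun r : ℝ => φ (r • ω.1)) (φ1 (r • ω.1) ω.1) r := fun r =>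
    (hd1 (r • ω.1)).comp_hasDerivAt r (hline r)
  have hφ1 : ∀ r : ℝ, HasDerivAt (fun r : ℝ => φ1 (r • ω.1) ω.1) (φ2 (r • ω.1) ω.1 ω.1) r := fun r =>
    ((hd2 (r • ω.1)).comp_hasDerivAt r (hline r)).clm_apply (hasDerivAt_const r ω.1) |>.congr_deriv (by simp)
  have hpow : ∀ (k : ℕ) (r : ℝ), HasDerivAt (fun r : ℝ => (r : ℂ) ^ (k + 1)) (((k + 1 : ℕ) : ℂ) * (r : ℂ) ^ k) r := fun k r => by
    have := (hasDerivAt_pow (k + 1) (r : ℂ)).comp_ofReal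
    simpa using this
  have n1 : ∀ r : ℝ, ‖φ1 (r • ω.1) ω.1‖ ≤ ‖φ1 (r • ω.1)‖ := fun r => by
    simpa [hω] using (φ1 (r • ω.1)).le_opNorm ω.1
  have n2 : ∀ r : ℝ, ‖φ2 (r • ω.1) ω.1 ω.1‖ ≤ ‖φ2 (r • ω.1)‖ := fun r => by
    refine ((φ2 (r • ω.1) ω.1).le_opNorm ω.1).trans ?_
    simpa [hω] using (φ2 (r • ω.1)).le_opNorm ω.1
  have hw : ∀ r : ℝ, 0 ≤ (1 + ‖r‖) ^ (-2 : ℝ) := fun r => by positivity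
  have t0 : ∀ j ≤ N + 1, ∀ r : ℝ, 0 ≤ r → ‖(r:ℂ) ^ j * φ (r • ω.1)‖ ≤ C0 * (1 + ‖r‖) ^ (-2 : ℝ) := by
    intro j hj r hr
    rw [norm_mul, norm_pow, Complex.norm_real, norm_of_nonneg hr]
    simpa [abs_of_nonneg hr] using h0 j hj r hr ω
  have t1 : ∀ j ≤ N + 1, ∀ r : ℝ, 0 ≤ r → ‖(r:ℂ) ^ j * φ1 (r • ω.1) ω.1‖ ≤ C1 * (1 + ‖r‖) ^ (-2 : ℝ) := by
    intro j hj r hr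
    rw [norm_mul, norm_pow, Complex.norm_real, norm_of_nonneg hr]
    refine le_trans ?_ (by simpa [abs_of_nonneg hr] using h1 j hj r hr ω)
    gcongr; exact n1 r
  have t2 : ∀ j ≤ N + 1, ∀ r : ℝ, 0 ≤ r → ‖(r:ℂ) ^ j * φ2 (r • ω.1) ω.1 ω.1‖ ≤ C2 * (1 + ‖r‖) ^ (-2 : ℝ) := by
    intro j hj r hr
    rw [norm_mul, norm_pow, Complex.norm_real, norm_of_nonneg hr]
    refine le_trans ?_ (by simpa [abs_of_nonneg hr] using h2 j hj r hr ω)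
    gcongr; exact n2 r
  refine halfline_fourier_bound (fun ρ => (ρ : ℂ) ^ (N + 1) * φ (ρ • ω.1))
    (fun ρ => ((N + 1 : ℕ) : ℂ) * ((ρ : ℂ) ^ N * φ (ρ • ω.1)) + (ρ : ℂ) ^ (N + 1) * φ1 (ρ • ω.1) ω.1)
    (fun ρ => ((N + 1 : ℕ) : ℂ) * ((N : ℂ) * ((ρ : ℂ) ^ (N - 1) * φ (ρ • ω.1))) +
        2 * (((N + 1 : ℕ) : ℂ) * ((ρ : ℂ) ^ N * φ1 (ρ • ω.1) ω.1))
      + (ρ : ℂ) ^ (N + 1) * φ2 (ρ • ω.1) ω.1 ω.1) M ?_ ?_ ?_ ?_ ?_ ?_ ?_ t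
  · intro r
    exact ((hpow N r).mul (hφ r)).congr_deriv (by ring)
  · intro r
    have hp : HasDerivAt (fun r : ℝ => (r : ℂ) ^ N) ((N : ℂ) * (r : ℂ) ^ (N - 1)) r := by
      simpa using (hasDerivAt_pow N (r : ℂ)).comp_ofReal
    exact (((hp.mul (hφ r)).const_mul ((N + 1 : ℕ) : ℂ)).add ((hpow N r).mul (hφ1 r))).congr_deriv (by ring)
  · have c0 := φ.continuous
    have c1 := φ1.continuous
    have c2 := φ2.continuous
    fun_prop
  · simp
  · intro r hr
    refine (t0 (N+1) le_rfl r hr).trans ?_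
    gcongr
    rw [hM]
    have : 0 ≤ (N + 1) * N * C0 + 2 * ((N + 1) * C1) + C2 + (N + 1) * C0 + C1 := by positivity
    linarith
  · intro r hr
    refine (norm_add_le _ _).trans ?_
    rw [norm_mul, Complex.norm_natCast]
    have a := t0 N (by omega) r hr
    have b := t1 (N+1) le_rfl r hr
    have : 0 ≤ ((N + 1) * N * C0 + 2 * ((N + 1) * C1) + C2 + C0) * (1 + ‖r‖) ^ (-2 : ℝ) := by positivity
    have a' : ((N + 1 : ℕ) : ℝ) * ‖(r:ℂ) ^ N * φ (r • ω.1)‖ ≤ ((N + 1 : ℕ) : ℝ) * (C0 * (1 + ‖r‖) ^ (-2 : ℝ)) := by gcongr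
    push_cast at a' ⊢
    rw [hM]
    linarith
  · intro r hr
    refine (norm_add_le _ _).trans ((add_le_add (norm_add_le _ _) le_rfl).trans ?_)
    rw [norm_mul ((N+1:ℕ):ℂ) (_ * (_ * _)), norm_mul (N:ℂ), norm_mul (2:ℂ), norm_mul ((N+1:ℕ):ℂ), Complex.norm_natCast, Complex.norm_natCast]
    have a := t0 (N-1) (by omega) r hr
    have b := t1 N (by omega) r hr
    have c := t2 (N+1) le_rfl r hr
    have : 0 ≤ ((N + 1) * C0 + C1 + C0) * (1 + ‖r‖) ^ (-2 : ℝ) := by positivity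
    have a' : ((N + 1 : ℕ) : ℝ) * (N * ‖(r:ℂ) ^ (N-1) * φ (r • ω.1)‖) ≤ ((N + 1 : ℕ) : ℝ) * (N * (C0 * (1 + ‖r‖) ^ (-2 : ℝ))) := by gcongr
    have b' : ((N + 1 : ℕ) : ℝ) * (‖(r:ℂ) ^ N * φ1 (r • ω.1) ω.1‖) ≤ ((N + 1 : ℕ) : ℝ) * ((C1 * (1 + ‖r‖) ^ (-2 : ℝ))) := by gcongr
    push_cast at a' b' ⊢
    rw [hM]
    simp only [Complex.norm_ofNat]
    linarith


lemma plancherel_aux (H : ℝ → ℂ) (hc : Continuous H) (hi : Integrable H)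
    (hU : Integrable (𝓕⁻ H)) :
    𝓕 (𝓕⁻ H) = H ∧ ∫ t, ‖𝓕⁻ H t‖ ^ 2 = ∫ τ, ‖H τ‖ ^ 2 := by
  have hF : Integrable (𝓕 H) := by
    have : 𝓕 H = fun w => 𝓕⁻ H (-w) := by
      ext w; rw [Real.fourierInv_eq_fourier_neg, neg_neg]
    rw [this]; exact hU.comp_neg
  have h1 : 𝓕 (𝓕⁻ H) = H := hc.fourier_fourierInv_eq hi hF
  refine ⟨h1, ?_⟩
  have h2 : ∫ ξ, innerSL ℂ (𝓕 (𝓕⁻ H) ξ) (H ξ) = ∫ x, innerSL ℂ (𝓕⁻ H x) (𝓕⁻ H x) := by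
    have := VectorFourier.integral_sesq_fourierIntegral_eq_neg_flip (innerSL ℂ)
      (L := innerₗ ℝ) continuous_fourierChar continuous_inner hU hi
    rw [flip_innerₗ] at this
    exact this
  rw [h1] at h2
  simp only [innerSL_apply_apply, inner_self_eq_norm_sq_to_K] at h2
  have h3 : ((∫ τ, ‖H τ‖ ^ 2 : ℝ) : ℂ) = ((∫ t, ‖𝓕⁻ H t‖ ^ 2 : ℝ) : ℂ) := by
    rw [← integral_complex_ofReal, ← integral_complex_ofReal]
    simpa using h2
  exact_mod_cast h3.symm

lemma phi_exists {n : ℕ} (u : SchwartzMap (Eu n) ℂ) (x : Eu n) :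
    ∃ φ : SchwartzMap (Eu n) ℂ, ∀ ξ, φ ξ = Complex.exp (Complex.I * (2 * π * inner ℝ x ξ : ℝ)) * 𝓕 (⇑u) ξ := by
  refine ⟨𝓕 (u.compSubConstCLM ℂ (-x)), fun ξ => ?_⟩
  rw [SchwartzMap.fourier_coe, Real.fourier_eq', Real.fourier_eq', ← integral_const_mul]
  rw [← integral_sub_right_eq_self _ x]
  congr 1
  ext v
  simp only [SchwartzMap.compSubConstCLM_apply, smul_eq_mul]
  rw [← mul_assoc, ← Complex.exp_add]
  congr 2
  · push_cast [inner_sub_left]; ring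
  · simp

/-- the spherical pieces of `u` -/
noncomputable def Bf {n : ℕ} (u : SchwartzMap (Eu n) ℂ) (ρ : ℝ) (x : Eu n) : ℂ :=
  ∫ ω, Complex.exp (Complex.I * (2 * π * inner ℝ x (ρ • ω.1) : ℝ)) * 𝓕 (⇑u) (ρ • ω.1) ∂(sig n)

lemma norm_cexp_I (a : ℝ) : ‖Complex.exp (Complex.I * (a : ℂ))‖ = 1 := by
  rw [mul_comm]; exact Complex.norm_exp_ofReal_mul_I _

lemma halfWave_eq {n : ℕ} (u : SchwartzMap (Eu n) ℂ) (t : ℝ) (x : Eu n) :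
    halfWave u t x = ∫ ξ, Complex.exp (Complex.I * t * ‖ξ‖) *
      (Complex.exp (Complex.I * (2 * π * inner ℝ x ξ : ℝ)) * 𝓕 (⇑u) ξ) := by
  rw [halfWave, Real.fourierInv_eq']
  congr 1
  ext ξ
  rw [smul_eq_mul, real_inner_comm]
  rw [show ((2 * π * inner ℝ x ξ : ℝ) : ℂ) * Complex.I = Complex.I * ((2 * π * inner ℝ x ξ : ℝ) : ℂ) by ring]
  ring

lemma halfWave_decay {n : ℕ} (hn : 2 ≤ n) (u : SchwartzMap (Eu n) ℂ) (x : Eu n) :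
    ∃ C, ∀ t : ℝ, ‖halfWave u t x‖ ≤ C / (1 + t ^ 2) := by
  obtain ⟨φ, hφ⟩ := phi_exists u x
  obtain ⟨C, hC⟩ := wave_decay hn φ
  refine ⟨C, fun t => ?_⟩
  rw [halfWave_eq]
  simpa only [hφ] using hC t

lemma Bf_cont {n : ℕ} (u : SchwartzMap (Eu n) ℂ) : Continuous (fun q : ℝ × Eu n => Bf u q.1 q.2) := by
  obtain ⟨C, hC, h⟩ := schwartz_bound (𝓕 u) 0
  have hc : Continuous (𝓕 (⇑u)) := (𝓕 u).continuous
  refine continuous_of_dominated (bound := fun _ => C) ?_ ?_ (integrable_const _) ?_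
  · intro q
    exact Continuous.aestronglyMeasurable (by fun_prop)
  · intro q
    refine ae_of_all _ fun ω => ?_
    rw [norm_mul, norm_cexp_I, one_mul]
    have := h (q.1 • ω.1)
    rw [pow_zero, one_mul] at this
    exact this
  · exact ae_of_all _ fun ω => by fun_prop

lemma Bf_bound {n : ℕ} (u : SchwartzMap (Eu n) ℂ) : ∃ C, 0 ≤ C ∧ ∀ ρ x, 0 ≤ ρ →
    ρ ^ (n - 1) * ‖Bf u ρ x‖ ≤ C * (1 + ‖ρ‖) ^ (-2 : ℝ) := by
  obtain ⟨C, hC, h⟩ := radial_bound (𝓕 u) (n - 1)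
  refine ⟨C * (sig n).real univ, by positivity, fun ρ x hρ => ?_⟩
  have : ρ ^ (n - 1) * ‖Bf u ρ x‖ = ‖∫ ω, (ρ ^ (n - 1) : ℝ) •
      (Complex.exp (Complex.I * (2 * π * inner ℝ x (ρ • ω.1) : ℝ)) * 𝓕 (⇑u) (ρ • ω.1)) ∂(sig n)‖ := by
    rw [integral_smul, norm_smul, norm_of_nonneg (by positivity), Bf]
  rw [this, mul_right_comm]
  refine norm_integral_le_of_norm_le_const (ae_of_all _ fun ω => ?_)
  rw [norm_smul, norm_mul, norm_cexp_I, one_mul, norm_of_nonneg (by positivity)]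
  exact h _ le_rfl ρ hρ ω

lemma halfWave_radial {n : ℕ} (hn : 2 ≤ n) (u : SchwartzMap (Eu n) ℂ) (t : ℝ) (x : Eu n) :
    halfWave u t x = ∫ ρ in Ioi (0:ℝ), Complex.exp (Complex.I * t * ρ) * ((ρ : ℂ) ^ (n - 1) * Bf u ρ x) := by
  obtain ⟨φ, hφ⟩ := phi_exists u x
  rw [halfWave_eq]
  simp only [Bf, ← hφ]
  rw [polar_wave hn, integral_integral_swap]
  · simp only [integral_const_mul]
  · obtain ⟨C, hC, h⟩ := radial_bound φ (n - 1)
    have hc := φ.continuous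
    have hw : Integrable (fun q : sphere (0 : Eu n) 1 × ℝ => C * (1 + ‖q.2‖) ^ (-2 : ℝ))
        ((sig n).prod (volume.restrict (Ioi 0))) :=
      (integrable_w.integrableOn.const_mul C).comp_snd _
    refine hw.mono' (Continuous.aestronglyMeasurable (by fun_prop)) ?_
    have : ∀ᵐ q : sphere (0 : Eu n) 1 × ℝ ∂((sig n).prod (volume.restrict (Ioi 0))), 0 < q.2 := by
      have h0 : ∀ᵐ r : ℝ ∂(volume.restrict (Ioi 0)), 0 < r := ae_restrict_mem measurableSet_Ioi
      exact Measure.quasiMeasurePreserving_snd.ae h0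
    filter_upwards [this] with q hq
    simp only [Function.uncurry]
    rw [norm_mul, norm_mul, norm_pow, Complex.norm_real, norm_of_nonneg hq.le,
      show Complex.I * t * q.2 = Complex.I * ((t * q.2 : ℝ) : ℂ) by push_cast; ring, norm_cexp_I, one_mul]
    have := h (n-1) le_rfl q.2 hq.le q.1
    rwa [norm_of_nonneg hq.le] at this

/-- the time Fourier transform of the half-wave -/
noncomputable def Wf {n : ℕ} (u : SchwartzMap (Eu n) ℂ) (τ : ℝ) (x : Eu n) : ℂ :=
  (2 * π * (max (2 * π * τ) 0) ^ (n - 1) : ℝ) * Bf u (2 * π * τ) x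

lemma Wf_cont {n : ℕ} (u : SchwartzMap (Eu n) ℂ) : Continuous (fun q : ℝ × Eu n => Wf u q.1 q.2) := by
  have := Bf_cont u
  have h2 : Continuous (fun q : ℝ × Eu n => Bf u (2 * π * q.1) q.2) :=
    this.comp (f := fun q : ℝ × Eu n => (2 * π * q.1, q.2)) (by fun_prop)
  unfold Wf
  fun_prop

lemma Wf_neg {n : ℕ} (hn : 2 ≤ n) (u : SchwartzMap (Eu n) ℂ) {τ : ℝ} (hτ : τ ≤ 0) (x : Eu n) :
    Wf u τ x = 0 := by
  have : 2 * π * τ ≤ 0 := by nlinarith [pi_pos]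
  rw [Wf, max_eq_right this, zero_pow (by omega)]
  simp

lemma Wf_bound {n : ℕ} (hn : 2 ≤ n) (u : SchwartzMap (Eu n) ℂ) : ∃ C, 0 ≤ C ∧ ∀ τ x,
    ‖Wf u τ x‖ ≤ C * (1 + ‖τ‖) ^ (-2 : ℝ) := by
  obtain ⟨C, hC, h⟩ := Bf_bound u
  refine ⟨2 * π * C, by positivity, fun τ x => ?_⟩
  rcases le_total τ 0 with hτ | hτ
  · rw [Wf_neg hn u hτ, norm_zero]; positivity
  · have h0 : 0 ≤ 2 * π * τ := by positivity
    have := h (2 * π * τ) x h0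
    rw [Wf, max_eq_left h0, norm_mul, Complex.norm_real, norm_of_nonneg (by positivity), mul_assoc (2*π),
      mul_assoc (2*π)]
    refine mul_le_mul_of_nonneg_left (this.trans ?_) (by positivity)
    refine mul_le_mul_of_nonneg_left ?_ hC
    refine rpow_le_rpow_of_nonpos (by positivity) ?_ (by norm_num)
    rw [norm_of_nonneg hτ, norm_of_nonneg h0]
    nlinarith [pi_gt_three]

lemma Wf_integrable {n : ℕ} (hn : 2 ≤ n) (u : SchwartzMap (Eu n) ℂ) (x : Eu n) :
    Integrable (fun τ => Wf u τ x) := by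
  obtain ⟨C, hC, h⟩ := Wf_bound hn u
  have hc : Continuous (fun τ => Wf u τ x) := (Wf_cont u).comp (f := fun τ => (τ, x)) (by fun_prop)
  exact (integrable_w.const_mul C).mono' hc.aestronglyMeasurable (ae_of_all _ fun τ => h τ x)

lemma halfWave_eq_fourierInv {n : ℕ} (hn : 2 ≤ n) (u : SchwartzMap (Eu n) ℂ) (x : Eu n) :
    (fun t => halfWave u t x) = 𝓕⁻ (fun τ => Wf u τ x) := by
  ext t
  rw [halfWave_radial hn, Real.fourierInv_eq']
  have h1 : ∫ τ, Complex.exp (((2 * π * inner ℝ τ t : ℝ) : ℂ) * Complex.I) • Wf u τ x =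
      ∫ τ in Ioi (0:ℝ), Complex.exp (((2 * π * inner ℝ τ t : ℝ) : ℂ) * Complex.I) • Wf u τ x := by
    symm
    apply setIntegral_eq_integral_of_forall_compl_eq_zero
    intro τ hτ
    rw [Wf_neg hn u (by simpa using hτ), smul_zero]
  rw [h1]
  have h2 := integral_comp_mul_left_Ioi (fun ρ : ℝ => Complex.exp (Complex.I * t * ρ) * ((ρ : ℂ) ^ (n - 1) * Bf u ρ x)) 0
    (b := 2 * π) (by positivity)
  rw [mul_zero] at h2
  have h3 : ∫ ρ in Ioi (0:ℝ), Complex.exp (Complex.I * t * ρ) * ((ρ : ℂ) ^ (n - 1) * Bf u ρ x) =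
    (2 * π : ℝ) • ((2 * π)⁻¹ • ∫ ρ in Ioi (0:ℝ), Complex.exp (Complex.I * t * ρ) * ((ρ : ℂ) ^ (n - 1) * Bf u ρ x)) := by
    rw [smul_smul, mul_inv_cancel₀ (by positivity), one_smul]
  rw [h3, ← h2, ← integral_smul]
  refine setIntegral_congr_fun measurableSet_Ioi fun τ hτ ↦ ?_
  have h0 : 0 ≤ 2 * π * τ := by have : (0:ℝ) < τ := hτ; positivity
  simp only [Wf, max_eq_left h0, smul_eq_mul, Complex.real_smul]
  rw [show Complex.I * (t:ℂ) * ((2 * π * τ : ℝ) : ℂ) = ((2 * π * inner ℝ τ t : ℝ) : ℂ) * Complex.I by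
    simp only [RCLike.inner_apply, conj_trivial]; push_cast; ring]
  push_cast
  ring

lemma halfWave_fourier {n : ℕ} (hn : 2 ≤ n) (u : SchwartzMap (Eu n) ℂ) (x : Eu n) :
    𝓕 (fun t => halfWave u t x) = (fun τ => Wf u τ x) ∧
    ∫ t, ‖halfWave u t x‖ ^ 2 = ∫ τ, ‖Wf u τ x‖ ^ 2 := by
  have hc : Continuous (fun τ => Wf u τ x) := (Wf_cont u).comp (f := fun τ => (τ, x)) (by fun_prop)
  have e := halfWave_eq_fourierInv hn u x
  obtain ⟨C, hC⟩ := halfWave_decay hn u x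
  have hU : Integrable (𝓕⁻ (fun τ => Wf u τ x)) := by
    have hm : AEStronglyMeasurable (𝓕⁻ (fun τ => Wf u τ x)) := by
      have : Continuous (𝓕⁻ (fun τ => Wf u τ x)) := by
        have h2 : 𝓕⁻ (fun τ => Wf u τ x) = fun w => 𝓕 (fun τ => Wf u τ x) (-w) := by
          ext w; rw [Real.fourierInv_eq_fourier_neg]
        rw [h2]
        exact (VectorFourier.fourierIntegral_continuous continuous_fourierChar
          (L := innerₗ ℝ) continuous_inner (Wf_integrable hn u x)).comp continuous_neg
      exact this.aestronglyMeasurable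
    refine (integrable_inv_one_add_sq.const_mul C).mono' hm (ae_of_all _ fun t => ?_)
    rw [← e]
    simpa [div_eq_mul_inv] using hC t
  have := plancherel_aux _ hc (Wf_integrable hn u x) hU
  rw [← e] at this
  refine ⟨this.1, ?_⟩
  exact this.2


/-- Bessel potentials preserve Schwartz functions -/
lemma multiplier {n : ℕ} (u : SchwartzMap (Eu n) ℂ) (s : ℝ) :
    ∃ v : SchwartzMap (Eu n) ℂ, ∀ ξ, 𝓕 (⇑v) ξ = ((1 + ‖ξ‖ ^ 2) ^ s : ℝ) * 𝓕 (⇑u) ξ := by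
  refine ⟨𝓕⁻ (SchwartzMap.smulLeftCLM ℂ (fun ξ : Eu n => (1 + ‖ξ‖ ^ 2) ^ s) (𝓕 u)), fun ξ => ?_⟩
  rw [← SchwartzMap.fourier_coe, FourierTransform.fourier_fourierInv_eq,
    SchwartzMap.smulLeftCLM_apply_apply (Function.hasTemperateGrowth_one_add_norm_sq_rpow _ s)]
  rw [Complex.real_smul]
  rfl

lemma Bf_mul {n : ℕ} {u v : SchwartzMap (Eu n) ℂ} {s : ℝ}
    (h : ∀ ξ, 𝓕 (⇑v) ξ = ((1 + ‖ξ‖ ^ 2) ^ s : ℝ) * 𝓕 (⇑u) ξ) (ρ : ℝ) (x : Eu n) :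
    Bf v ρ x = ((1 + ρ ^ 2) ^ s : ℝ) * Bf u ρ x := by
  rw [Bf, Bf, ← integral_const_mul]
  congr 1
  ext ω
  have hω : ‖(ω : Eu n)‖ = 1 := by simp
  rw [h, norm_smul, hω, mul_one, norm_eq_abs, sq_abs]
  ring

lemma Wf_mul {n : ℕ} {u v : SchwartzMap (Eu n) ℂ} {s : ℝ}
    (h : ∀ ξ, 𝓕 (⇑v) ξ = ((1 + ‖ξ‖ ^ 2) ^ s : ℝ) * 𝓕 (⇑u) ξ) (τ : ℝ) (x : Eu n) :
    Wf v τ x = ((1 + (2 * π * τ) ^ 2) ^ s : ℝ) * Wf u τ x := by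
  rw [Wf, Wf, Bf_mul h]; ring

lemma Bf_kernel {n : ℕ} (u : SchwartzMap (Eu n) ℂ) (ρ : ℝ) (x : Eu n) :
    Bf u ρ x = ∫ y, u y * Ksph ((2 * π * ρ) • (x - y)) := by
  simp only [Bf, Ksph, Real.fourier_eq', ← integral_const_mul]
  rw [integral_integral_swap]
  · congr 1
    ext y
    congr 1
    ext ω
    rw [smul_eq_mul, ← mul_assoc, ← Complex.exp_add, mul_comm (u y)]
    congr 2
    simp only [inner_smul_left, inner_smul_right, inner_sub_left]
    push_cast
    simp
    ring
  · have hc := u.continuous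
    have hi : Integrable (fun q : sphere (0 : Eu n) 1 × Eu n => ‖u q.2‖) ((sig n).prod volume) :=
      u.integrable.norm.comp_snd _
    refine hi.mono' (Continuous.aestronglyMeasurable (by fun_prop)) (ae_of_all _ fun q => ?_)
    simp only [Function.uncurry]
    rw [norm_mul, norm_cexp_I, norm_smul, Complex.norm_exp_ofReal_mul_I, one_mul, one_mul]

lemma peetre (ρ X Y Z : ℝ) (hρ : 0 ≤ ρ) (hX : 0 ≤ X) (hY : 0 ≤ Y) (hZ : 0 ≤ Z) (h : X ≤ Z + Y) :
    1 + ρ * X ≤ (1 + 2 * π * ρ * Z) * ((1 + ρ) * (1 + Y)) := by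
  have h1 : ρ * X ≤ ρ * (Z + Y) := by gcongr
  have h2 : ρ * Z ≤ 2 * π * ρ * Z := by nlinarith [mul_nonneg hρ hZ, pi_gt_three]
  have h3 : 0 ≤ ρ * Z := by positivity
  have h4 : 0 ≤ ρ * Y := by positivity
  have : 1 + ρ * X ≤ (1 + ρ * Z) * ((1 + ρ) * (1 + Y)) := by
    have : 0 ≤ ρ * Z * (ρ + Y + ρ * Y) := by positivity
    nlinarith
  refine this.trans ?_
  gcongr

lemma Bf_decay {n : ℕ} (hn : 2 ≤ n) (u : SchwartzMap (Eu n) ℂ) :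
    ∃ C, 0 ≤ C ∧ ∀ (ρ : ℝ) (x : Eu n), 0 ≤ ρ → ‖Bf u ρ x‖ ≤
      C * ((1 + ρ) ^ (((n:ℝ) - 1) / 2) * (1 + ρ * ‖x‖) ^ (-(((n:ℝ) - 1) / 2))) := by
  obtain ⟨C, hC, hK⟩ := Ksph_decay hn
  obtain ⟨C1, hC1, h1⟩ := schwartz_bound u (2 * n + 1)
  set a := ((n:ℝ) - 1) / 2 with ha
  have hn' : (2:ℝ) ≤ n := by exact_mod_cast hn
  have ha0 : 0 ≤ a := by rw [ha]; linarith
  have hint : Integrable (fun y : Eu n => (1 + ‖y‖) ^ (-((n:ℝ) + 1))) :=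
    integrable_one_add_norm (by simp)
  refine ⟨C * C1 * ∫ y : Eu n, (1 + ‖y‖) ^ (-((n:ℝ) + 1)), by positivity, fun ρ x hρ => ?_⟩
  rw [Bf_kernel, mul_right_comm (C * C1), ← integral_const_mul]
  refine norm_integral_le_of_norm_le (hint.const_mul _) (ae_of_all _ fun y => ?_)
  rw [norm_mul]
  have e1 := hK ((2 * π * ρ) • (x - y))
  rw [norm_smul, norm_of_nonneg (by positivity : 0 ≤ 2 * π * ρ)] at e1
  have e2 : (1 + 2 * π * ρ * ‖x - y‖) ^ (-a) ≤
      (1 + ρ) ^ a * (1 + ‖y‖) ^ a * (1 + ρ * ‖x‖) ^ (-a) := by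
    have := peetre ρ ‖x‖ ‖y‖ ‖x - y‖ hρ (norm_nonneg _) (norm_nonneg _) (norm_nonneg _)
      (by simpa using norm_add_le (x - y) y)
    rw [rpow_neg (by positivity), rpow_neg (by positivity), ← div_eq_mul_inv,
      le_div_iff₀ (by positivity), inv_mul_le_iff₀ (by positivity), ← mul_rpow (by positivity) (by positivity),
      ← mul_rpow (by positivity) (by positivity)]
    exact rpow_le_rpow (by positivity) this ha0
  have e3 : ‖u y‖ * (1 + ‖y‖) ^ a ≤ C1 * (1 + ‖y‖) ^ (-((n:ℝ) + 1)) := by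
    rw [rpow_neg (by positivity), ← div_eq_mul_inv, le_div_iff₀ (by positivity), mul_assoc,
      ← rpow_add (by positivity)]
    refine le_trans ?_ (h1 y)
    rw [mul_comm]
    refine mul_le_mul_of_nonneg_right ?_ (norm_nonneg _)
    rw [← rpow_natCast]
    refine rpow_le_rpow_of_exponent_le (by simp) ?_
    push_cast; rw [ha]; linarith
  calc ‖u y‖ * ‖Ksph ((2 * π * ρ) • (x - y))‖
      ≤ ‖u y‖ * (C * ((1 + ρ) ^ a * (1 + ‖y‖) ^ a * (1 + ρ * ‖x‖) ^ (-a))) := by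
        gcongr; exact e1.trans (by gcongr)
    _ = C * ((1 + ρ) ^ a * (1 + ρ * ‖x‖) ^ (-a)) * (‖u y‖ * (1 + ‖y‖) ^ a) := by ring
    _ ≤ C * ((1 + ρ) ^ a * (1 + ρ * ‖x‖) ^ (-a)) * (C1 * (1 + ‖y‖) ^ (-((n:ℝ) + 1))) := by gcongr
    _ = _ := by ring

lemma Wf_decay {n : ℕ} (hn : 2 ≤ n) (u : SchwartzMap (Eu n) ℂ) (b : ℝ) (hb0 : 0 ≤ b) (hb : b ≤ (n:ℝ) - 1) :
    ∃ C, 0 ≤ C ∧ ∀ τ x, 0 < τ → ‖Wf u τ x‖ ≤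
      C * ((1 + 2 * π * τ) ^ (-2 : ℝ) * ((2 * π * τ) ^ b * (1 + 2 * π * τ * ‖x‖) ^ (-(((n:ℝ) - 1) / 2)))) := by
  obtain ⟨v, hv⟩ := multiplier u ((n : ℝ) + 1)
  obtain ⟨C, hC, h⟩ := Bf_decay hn v
  have hn' : (2:ℝ) ≤ n := by exact_mod_cast hn
  refine ⟨2 * π * 2 ^ ((n:ℝ) + 1) * C, by positivity, fun τ x hτ => ?_⟩
  have h0 : 0 < 2 * π * τ := by positivity
  rw [Wf, max_eq_left h0.le, norm_mul, Complex.norm_real, norm_of_nonneg (by positivity)]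
  have e := h (2 * π * τ) x h0.le
  rw [Bf_mul hv, norm_mul, Complex.norm_real, norm_of_nonneg (by positivity)] at e
  generalize 2 * π * τ = ρ at *
  have hβ : 0 ≤ ‖Bf u ρ x‖ := norm_nonneg _
  generalize ‖Bf u ρ x‖ = β at *
  have hq : 0 ≤ (1 + ρ * ‖x‖) ^ (-(((n:ℝ) - 1) / 2)) := by positivity
  generalize (1 + ρ * ‖x‖) ^ (-(((n:ℝ) - 1) / 2)) = Q at *
  have e1 : ρ ^ (n - 1) ≤ ρ ^ b * (1 + ρ) ^ ((n:ℝ) - 1) := by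
    rw [← rpow_natCast, Nat.cast_sub (by omega), Nat.cast_one]
    calc ρ ^ ((n:ℝ) - 1) = ρ ^ b * ρ ^ ((n:ℝ) - 1 - b) := by rw [← rpow_add h0]; congr 1; ring
      _ ≤ ρ ^ b * (1 + ρ) ^ ((n:ℝ) - 1 - b) := by
        gcongr
        linarith
      _ ≤ _ := by
        have : (1 + ρ) ^ ((n:ℝ) - 1 - b) ≤ (1 + ρ) ^ ((n:ℝ) - 1) := by
          apply rpow_le_rpow_of_exponent_le <;> linarith
        gcongr
  have e2 : (1 + ρ) ^ ((n:ℝ) - 1) * (1 + ρ) ^ (((n:ℝ) - 1) / 2) * (1 + ρ) ^ (2:ℝ) ≤ 2 ^ ((n:ℝ)+1) * (1 + ρ ^ 2) ^ ((n:ℝ)+1) := by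
    rw [← rpow_add (by positivity), ← rpow_add (by positivity), ← mul_rpow (by positivity) (by positivity)]
    calc (1 + ρ) ^ ((n:ℝ) - 1 + ((n:ℝ) - 1) / 2 + 2) ≤ (1 + ρ) ^ (2 * ((n:ℝ) + 1)) := by
          apply rpow_le_rpow_of_exponent_le <;> linarith
      _ = ((1 + ρ) ^ (2:ℝ)) ^ ((n:ℝ)+1) := by rw [← rpow_mul (by positivity)]
      _ ≤ _ := by
        gcongr
        rw [rpow_two]; nlinarith [sq_nonneg (1 - ρ)]
  have e3 : β ≤ C * ((1 + ρ) ^ (((n:ℝ) - 1) / 2) * Q) / (1 + ρ ^ 2) ^ ((n:ℝ) + 1) := by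
    rw [le_div_iff₀ (by positivity)]; linarith
  rw [rpow_neg (by positivity)]
  calc 2 * π * ρ ^ (n - 1) * β ≤ 2 * π * (ρ ^ b * (1 + ρ) ^ ((n:ℝ) - 1)) * (C * ((1 + ρ) ^ (((n:ℝ) - 1) / 2) * Q) / (1 + ρ ^ 2) ^ ((n:ℝ) + 1)) := by gcongr
    _ = 2 * π * C * ρ ^ b * Q * (((1 + ρ) ^ ((n:ℝ) - 1) * (1 + ρ) ^ (((n:ℝ) - 1) / 2) * (1 + ρ) ^ (2:ℝ)) / ((1 + ρ ^ 2) ^ ((n:ℝ) + 1) * (1 + ρ) ^ (2:ℝ))) := by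
        field_simp
    _ ≤ 2 * π * C * ρ ^ b * Q * ((2 ^ ((n:ℝ)+1) * (1 + ρ ^ 2) ^ ((n:ℝ)+1)) / ((1 + ρ ^ 2) ^ ((n:ℝ) + 1) * (1 + ρ) ^ (2:ℝ))) := by gcongr
    _ = _ := by field_simp


lemma Wf_cont_x {n : ℕ} (u : SchwartzMap (Eu n) ℂ) (τ : ℝ) : Continuous (fun x => Wf u τ x) :=
  (Wf_cont u).comp (f := fun x => (τ, x)) (by fun_prop)

lemma Wf_Lr {n : ℕ} (hn : 2 ≤ n) (u : SchwartzMap (Eu n) ℂ) (r : ℝ) (hr : 0 < r)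
    (hrn : ((n:ℝ) - 1) / 2 * r = n + 1) :
    ∃ D, 0 ≤ D ∧ ∀ τ, Integrable (fun x => ‖Wf u τ x‖ ^ r) ∧
      ∫ x, ‖Wf u τ x‖ ^ r ≤ D * ((1 + ‖τ‖) ^ (-2 : ℝ)) ^ r := by
  have hn' : (2:ℝ) ≤ n := by exact_mod_cast hn
  obtain ⟨C, hC, h⟩ := Wf_decay hn u (n / r) (by positivity) (by
    rw [div_le_iff₀ hr]; nlinarith)
  have hint : Integrable (fun y : Eu n => (1 + ‖y‖) ^ (-((n:ℝ) + 1))) :=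
    integrable_one_add_norm (by simp)
  set K := ∫ y : Eu n, (1 + ‖y‖) ^ (-((n:ℝ) + 1)) with hK
  have hK0 : 0 ≤ K := by positivity
  refine ⟨C ^ r * K, by positivity, fun τ => ?_⟩
  rcases le_or_gt τ 0 with hτ | hτ
  · simp only [Wf_neg hn u hτ, norm_zero, zero_rpow hr.ne']
    refine ⟨by simp, ?_⟩
    simp only [integral_zero]; positivity
  have h0 : 0 < 2 * π * τ := by positivity
  set ρ := 2 * π * τ with hρ
  have hb : ∀ x, ‖Wf u τ x‖ ^ r ≤ (C * (1 + ρ) ^ (-2:ℝ)) ^ r * ρ ^ n * (1 + ‖ρ • x‖) ^ (-((n:ℝ) + 1)) := by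
    intro x
    refine (rpow_le_rpow (norm_nonneg _) (h τ x hτ) hr.le).trans (le_of_eq ?_)
    rw [← mul_assoc C, mul_rpow (by positivity) (by positivity), mul_rpow (x := ρ ^ _) (by positivity) (by positivity),
      ← rpow_mul h0.le, ← rpow_mul (by positivity), div_mul_cancel₀ _ hr.ne', neg_mul, hrn, rpow_natCast,
      norm_smul, norm_of_nonneg h0.le]
    ring
  have hi2 : Integrable (fun x : Eu n => (C * (1 + ρ) ^ (-2:ℝ)) ^ r * ρ ^ n * (1 + ‖ρ • x‖) ^ (-((n:ℝ) + 1))) :=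
    (hint.comp_smul h0.ne').const_mul _
  have hi : Integrable (fun x => ‖Wf u τ x‖ ^ r) := by
    refine hi2.mono' ?_ (ae_of_all _ fun x => ?_)
    · have := Wf_cont_x u τ
      exact (this.norm.rpow_const fun x => Or.inr hr.le).aestronglyMeasurable
    · rw [norm_of_nonneg (by positivity)]; exact hb x
  refine ⟨hi, (integral_mono hi hi2 hb).trans ?_⟩
  rw [integral_const_mul, Measure.integral_comp_smul_of_nonneg (hR := h0.le) volume (fun x : Eu n => (1 + ‖x‖) ^ (-((n:ℝ) + 1))) ρ,
    ← hK, finrank_euclideanSpace_fin, smul_eq_mul]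
  have : (C * (1 + ρ) ^ (-2:ℝ)) ^ r * ρ ^ n * ((ρ ^ n)⁻¹ * K) = C ^ r * K * ((1 + ρ) ^ (-2:ℝ)) ^ r := by
    rw [mul_rpow hC (by positivity)]
    field_simp
  rw [this]
  refine mul_le_mul_of_nonneg_left ?_ (by positivity)
  refine rpow_le_rpow (by positivity) ?_ hr.le
  refine rpow_le_rpow_of_nonpos (by positivity) ?_ (by norm_num)
  rw [norm_of_nonneg hτ.le, hρ]
  nlinarith [pi_gt_three]

lemma Wf_L2Lr {n : ℕ} (hn : 2 ≤ n) (u : SchwartzMap (Eu n) ℂ) (r : ℝ) (hr : 0 < r)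
    (hrn : ((n:ℝ) - 1) / 2 * r = n + 1) :
    Integrable (fun τ => (∫ x, ‖Wf u τ x‖ ^ r) ^ (2 / r)) := by
  obtain ⟨D, hD, h⟩ := Wf_Lr hn u r hr hrn
  have hm : StronglyMeasurable (fun τ => ∫ x, ‖Wf u τ x‖ ^ r) := by
    have hc : Continuous (Function.uncurry fun τ x => ‖Wf u τ x‖ ^ r) :=
      (Wf_cont u).norm.rpow_const fun x => Or.inr hr.le
    exact hc.stronglyMeasurable.integral_prod_right
  refine (integrable_w.const_mul (D ^ (2 / r))).mono' (hm.measurable.pow_const _).aestronglyMeasurable (ae_of_all _ fun τ => ?_)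
  have h0 : 0 ≤ ∫ x, ‖Wf u τ x‖ ^ r := integral_nonneg fun x => by positivity
  rw [norm_of_nonneg (by positivity)]
  refine (rpow_le_rpow h0 (h τ).2 (by positivity)).trans ?_
  rw [mul_rpow hD (by positivity), ← rpow_mul (by positivity), mul_div_cancel₀ _ hr.ne']
  refine mul_le_mul_of_nonneg_left ?_ (by positivity)
  have h1 : (1 + ‖τ‖) ^ (-2:ℝ) ≤ 1 := rpow_le_one_of_one_le_of_nonpos (by simp) (by norm_num)
  have h2 : 0 ≤ (1 + ‖τ‖) ^ (-2:ℝ) := by positivity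
  rw [rpow_two]
  nlinarith

lemma gauss_conv {n : ℕ} (u : SchwartzMap (Eu n) ℂ) {ρ : ℝ} (hρ : 0 < ρ) (x : Eu n) :
    ∫ y, (rexp (-(π * ‖ρ • y‖ ^ 2)) : ℂ) * Bf u ρ (x - y) = ((ρ ^ n)⁻¹ * rexp (-π) : ℝ) * Bf u ρ x := by
  have hg : Integrable (fun y : Eu n => rexp (-(π * ‖ρ • y‖ ^ 2))) := by
    have h1 : Integrable (fun y : Eu n => Complex.exp (-(π:ℂ) * ‖y‖ ^ 2 + (0:ℂ) * (inner ℝ (0 : Eu n) y : ℝ))) :=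
      GaussianFourier.integrable_cexp_neg_mul_sq_norm_add (b := (π : ℂ)) (by simpa using pi_pos) 0 0
    have h2 := h1.norm.comp_smul hρ.ne'
    refine h2.congr (ae_of_all _ fun y => ?_)
    simp only [Complex.norm_exp]
    congr 1
    simp [← Complex.ofReal_pow]
  have hF : ∀ ω : sphere (0 : Eu n) 1, ∫ y, Complex.exp (-(Complex.I * (2 * π * inner ℝ y (ρ • ω.1) : ℝ))) * (rexp (-(π * ‖ρ • y‖ ^ 2)) : ℂ)
      = ((ρ ^ n)⁻¹ * rexp (-π) : ℝ) := by
    intro ω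
    have hω : ‖(ω : Eu n)‖ = 1 := by simp
    have h1 := fourier_gaussian_innerProductSpace (V := Eu n) (b := (π : ℂ)) (by simpa using pi_pos) ω.1
    rw [Real.fourier_eq', div_self (by exact_mod_cast pi_ne_zero), Complex.one_cpow, one_mul, hω] at h1
    have h2 := Measure.integral_comp_smul_of_nonneg (hR := hρ.le) volume (fun v : Eu n => Complex.exp (((-2 * π * inner ℝ v ω.1 : ℝ) : ℂ) * Complex.I) • Complex.exp (-(π:ℂ) * ‖v‖ ^ 2)) ρ
    rw [h1, finrank_euclideanSpace_fin] at h2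
    refine Eq.trans ?_ (h2.trans ?_)
    · congr 1
      ext y
      simp only [smul_eq_mul, inner_smul_left, inner_smul_right]
      congr 1
      · congr 1
        simp
        ring
      · push_cast
        congr 1
        ring
    · rw [Complex.real_smul]
      push_cast
      congr 2
      field_simp
  simp only [Bf, ← integral_const_mul]
  rw [integral_integral_swap]
  · congr 1
    ext ω
    rw [← hF ω, ← integral_mul_const]
    congr 1
    ext y
    rw [inner_sub_left, mul_sub, Complex.ofReal_sub, mul_sub, sub_eq_add_neg, Complex.exp_add]
    ring
  · obtain ⟨C, hC, h⟩ := schwartz_bound (𝓕 u) 0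
    have hc : Continuous (𝓕 (⇑u)) := (𝓕 u).continuous
    have hi : Integrable (fun q : Eu n × sphere (0 : Eu n) 1 => rexp (-(π * ‖ρ • q.1‖ ^ 2)) * C) (volume.prod (sig n)) :=
      (hg.mul_const C).comp_fst _
    refine hi.mono' (Continuous.aestronglyMeasurable (by fun_prop)) (ae_of_all _ fun q => ?_)
    simp only [Function.uncurry]
    rw [norm_mul, norm_mul, norm_cexp_I, one_mul, Complex.norm_real, norm_of_nonneg (by positivity)]
    refine mul_le_mul_of_nonneg_left ?_ (by positivity)
    have := h (ρ • q.2.1)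
    rw [pow_zero, one_mul] at this
    exact this


lemma gauss_integrable {n : ℕ} {b : ℝ} (hb : 0 < b) : Integrable (fun y : Eu n => rexp (-(b * ‖y‖ ^ 2))) := by
  have h1 : Integrable (fun y : Eu n => Complex.exp (-(b:ℂ) * ‖y‖ ^ 2 + (0:ℂ) * (inner ℝ (0 : Eu n) y : ℝ))) :=
    GaussianFourier.integrable_cexp_neg_mul_sq_norm_add (b := (b : ℂ)) (by simpa using hb) 0 0
  refine h1.norm.congr (ae_of_all _ fun y => ?_)
  simp only [Complex.norm_exp]
  congr 1
  simp [← Complex.ofReal_pow]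

lemma memLp_of_rpow {n : ℕ} {f : Eu n → ℂ} (hf : Continuous f) {r : ℝ} (hr : 0 < r)
    (h : Integrable (fun x => ‖f x‖ ^ r)) : MemLp f (ENNReal.ofReal r) := by
  rw [← integrable_norm_rpow_iff hf.aestronglyMeasurable (by simpa using hr) (by simp)]
  simpa [ENNReal.toReal_ofReal hr.le] using h

lemma bernstein_sup {n : ℕ} {r : ℝ} (hr : 1 < r) :
    ∃ C, 0 ≤ C ∧ ∀ (u : SchwartzMap (Eu n) ℂ) (τ : ℝ), 0 < τ → Integrable (fun x => ‖Wf u τ x‖ ^ r) →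
      ∀ x, ‖Wf u τ x‖ ≤ C * (2 * π * τ) ^ (n / r) * (∫ x, ‖Wf u τ x‖ ^ r) ^ (1 / r) := by
  have hconj := Real.HolderConjugate.conjExponent hr
  set q := r.conjExponent with hq
  have hq0 : 0 < q := hconj.symm.pos
  have hr0 : 0 < r := by linarith
  have hg0 := gauss_integrable (n := n) (b := π * q) (by positivity)
  set J := ∫ y : Eu n, rexp (-(π * q * ‖y‖ ^ 2)) with hJ
  have hJ0 : 0 ≤ J := integral_nonneg fun y => by positivity
  refine ⟨rexp π * J ^ (1 / q), by positivity, fun u τ hτ hi x => ?_⟩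
  have h0 : 0 < 2 * π * τ := by positivity
  have hid : ∫ y, (rexp (-(π * ‖(2 * π * τ) • y‖ ^ 2)) : ℂ) * Wf u τ (x - y) =
      ((((2 * π * τ) ^ n)⁻¹ * rexp (-π) : ℝ) : ℂ) * Wf u τ x := by
    simp only [Wf]
    rw [mul_left_comm, ← gauss_conv u h0 x, ← integral_const_mul]
    congr 1
    ext y; ring
  set ρ := 2 * π * τ with hρ
  have hgq : ∀ y : Eu n, ‖(rexp (-(π * ‖ρ • y‖ ^ 2)) : ℂ)‖ ^ q = rexp (-(π * q * ‖ρ • y‖ ^ 2)) := by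
    intro y
    rw [Complex.norm_real, norm_of_nonneg (by positivity), ← Real.exp_mul]
    congr 1; ring
  have hgi : Integrable (fun y : Eu n => ‖(rexp (-(π * ‖ρ • y‖ ^ 2)) : ℂ)‖ ^ q) := by
    simp only [hgq]
    exact hg0.comp_smul h0.ne'
  have hcW := Wf_cont_x u τ
  have hfi : Integrable (fun y => ‖Wf u τ (x - y)‖ ^ r) := hi.comp_sub_left x
  have hold := integral_mul_norm_le_Lp_mul_Lq hconj
    (memLp_of_rpow (f := fun y => Wf u τ (x - y)) (by fun_prop) hr0 hfi)
    (memLp_of_rpow (f := fun y : Eu n => (rexp (-(π * ‖ρ • y‖ ^ 2)) : ℂ)) (by fun_prop) hq0 hgi)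
  have e1 : ∫ y, ‖Wf u τ (x - y)‖ ^ r = ∫ y, ‖Wf u τ y‖ ^ r :=
    integral_sub_left_eq_self (fun y => ‖Wf u τ y‖ ^ r) volume x
  have e2 : ∫ y : Eu n, ‖(rexp (-(π * ‖ρ • y‖ ^ 2)) : ℂ)‖ ^ q = (ρ ^ n)⁻¹ * J := by
    simp only [hgq]
    rw [Measure.integral_comp_smul_of_nonneg (hR := h0.le) volume (fun y : Eu n => rexp (-(π * q * ‖y‖ ^ 2))) ρ,
      finrank_euclideanSpace_fin, smul_eq_mul]
  have e3 : (ρ ^ n)⁻¹ * rexp (-π) * ‖Wf u τ x‖ ≤ ∫ y, ‖Wf u τ (x - y)‖ * ‖(rexp (-(π * ‖ρ • y‖ ^ 2)) : ℂ)‖ := by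
    have : (ρ ^ n)⁻¹ * rexp (-π) * ‖Wf u τ x‖ = ‖∫ y, (rexp (-(π * ‖ρ • y‖ ^ 2)) : ℂ) * Wf u τ (x - y)‖ := by
      rw [hid, norm_mul, Complex.norm_real, norm_of_nonneg (by positivity)]
    rw [this]
    refine (norm_integral_le_integral_norm _).trans (le_of_eq ?_)
    congr 1; ext y; rw [norm_mul, mul_comm]
  have e4 := e3.trans hold
  rw [e1, e2] at e4
  have e5 : ((ρ ^ n)⁻¹ * J) ^ (1 / q) = (ρ ^ n)⁻¹ * ρ ^ (n / r) * J ^ (1 / q) := by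
    rw [mul_rpow (by positivity) hJ0]
    congr 1
    rw [← rpow_natCast, ← rpow_neg h0.le, ← rpow_mul h0.le, ← rpow_add h0]
    congr 1
    have := hconj.inv_add_inv_eq_one
    have h1 : 1 / q = 1 - r⁻¹ := by rw [one_div]; linarith
    rw [h1]; ring
  rw [e5] at e4
  have e6 : rexp π * ρ ^ n * ((ρ ^ n)⁻¹ * rexp (-π) * ‖Wf u τ x‖) = ‖Wf u τ x‖ := by
    rw [Real.exp_neg]; field_simp
  rw [← e6]
  refine (mul_le_mul_of_nonneg_left e4 (by positivity)).trans (le_of_eq ?_)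
  field_simp

/-- Bernstein's inequality in `L^p` -/
lemma bernstein_Lp {n : ℕ} {r p : ℝ} (hr : 1 < r) (hp : r ≤ p) :
    ∃ C, 0 ≤ C ∧ ∀ (u : SchwartzMap (Eu n) ℂ) (τ : ℝ), 0 < τ → Integrable (fun x => ‖Wf u τ x‖ ^ r) →
      Integrable (fun x => ‖Wf u τ x‖ ^ p) ∧ 
      (∫ x, ‖Wf u τ x‖ ^ p) ^ (2 / p) ≤ C * (2 * π * τ) ^ (2 * (n * (1 / r - 1 / p))) * (∫ x, ‖Wf u τ x‖ ^ r) ^ (2 / r) := by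
  obtain ⟨C, hC, h⟩ := bernstein_sup (n := n) hr
  have hr0 : 0 < r := by linarith
  have hp0 : 0 < p := by linarith
  refine ⟨C ^ ((p - r) * (2 / p)), by positivity, fun u τ hτ hi => ?_⟩
  have hb := h u τ hτ hi
  have h0 : 0 < 2 * π * τ := by positivity
  set ρ := 2 * π * τ with hρ
  set A := ∫ x, ‖Wf u τ x‖ ^ r with hA
  have hA0 : 0 ≤ A := integral_nonneg fun y => by positivity
  have hpt : ∀ x, ‖Wf u τ x‖ ^ p ≤ (C * ρ ^ (n / r) * A ^ (1 / r)) ^ (p - r) * ‖Wf u τ x‖ ^ r := by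
    intro x
    have : ‖Wf u τ x‖ ^ p = ‖Wf u τ x‖ ^ (p - r) * ‖Wf u τ x‖ ^ r := by
      rw [← rpow_add_of_nonneg (norm_nonneg _) (by linarith) hr0.le]; congr 1; ring
    rw [this]
    refine mul_le_mul_of_nonneg_right ?_ (by positivity)
    exact rpow_le_rpow (norm_nonneg _) (hb x) (by linarith)
  have hi2 := hi.const_mul ((C * ρ ^ (n / r) * A ^ (1 / r)) ^ (p - r))
  have hip : Integrable (fun x => ‖Wf u τ x‖ ^ p) := by
    refine hi2.mono' ?_ (ae_of_all _ fun x => ?_)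
    · have := Wf_cont_x u τ
      exact (this.norm.rpow_const fun x => Or.inr hp0.le).aestronglyMeasurable
    · rw [norm_of_nonneg (by positivity)]; exact hpt x
  refine ⟨hip, ?_⟩
  have h1 := integral_mono hip hi2 hpt
  rw [integral_const_mul, ← hA] at h1
  refine (rpow_le_rpow (integral_nonneg fun y => by positivity) h1 (by positivity)).trans (le_of_eq ?_)
  rw [mul_rpow (by positivity) hA0, ← rpow_mul (by positivity), mul_rpow (by positivity) (by positivity),
    mul_rpow (by positivity) (by positivity), ← rpow_mul h0.le, ← rpow_mul hA0, mul_assoc, ← rpow_add_of_nonneg hA0]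
  · congr 1
    · congr 2
      field_simp
    · congr 1
      field_simp
      ring
  · have : 0 ≤ p - r := by linarith
    positivity
  · positivity


/-- Minkowski's integral inequality (when the left side is finite) -/
lemma minkowski_aux {α β : Type*} [MeasurableSpace α] [MeasurableSpace β] (μ : Measure α) (ν : Measure β)
    [SFinite μ] [SFinite ν] (f : α → β → ENNReal) (hf : Measurable (Function.uncurry f)) {q : ℝ} (hq : 1 < q)
    (hfin : ∫⁻ x, (∫⁻ t, f x t ∂ν) ^ q ∂μ ≠ ⊤) :
    (∫⁻ x, (∫⁻ t, f x t ∂ν) ^ q ∂μ) ^ (1 / q) ≤ ∫⁻ t, (∫⁻ x, f x t ^ q ∂μ) ^ (1 / q) ∂ν := by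
  have hconj := Real.HolderConjugate.conjExponent hq
  set q' := q.conjExponent with hq'
  have hq0 : 0 < q := by linarith
  set G : α → ENNReal := fun x => ∫⁻ t, f x t ∂ν with hG
  have hGm : Measurable G := hf.lintegral_prod_right
  set I := ∫⁻ x, G x ^ q ∂μ with hI
  change I ^ (1 / q) ≤ _
  set T := ∫⁻ t, (∫⁻ x, f x t ^ q ∂μ) ^ (1 / q) ∂ν with hT
  have hexp : (q - 1) * q' = q := by
    rw [hq', Real.conjExponent]; field_simp [show q - 1 ≠ 0 by linarith]
  have h1 : I ≤ T * I ^ (1 / q') := by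
    calc I = ∫⁻ x, ∫⁻ t, f x t * G x ^ (q - 1) ∂ν ∂μ := by
          rw [hI]
          congr 1
          ext x
          have hfx : Measurable (f x) := hf.of_uncurry_left
          rw [lintegral_mul_const _ hfx]
          change G x ^ q = G x * G x ^ (q - 1)
          conv_rhs => rw [← ENNReal.rpow_one (G x), ← ENNReal.rpow_mul, ← ENNReal.rpow_add_of_nonneg _ _ zero_le_one (by linarith)]
          congr 1; ring
      _ = ∫⁻ t, ∫⁻ x, f x t * G x ^ (q - 1) ∂μ ∂ν := by
          apply lintegral_lintegral_swap
          exact (hf.mul ((hGm.comp measurable_fst).pow_const _)).aemeasurable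
      _ ≤ ∫⁻ t, (∫⁻ x, f x t ^ q ∂μ) ^ (1 / q) * I ^ (1 / q') ∂ν := by
          refine lintegral_mono fun t => ?_
          have hft : Measurable (fun x => f x t) := hf.of_uncurry_right
          refine (ENNReal.lintegral_mul_le_Lp_mul_Lq μ hconj hft.aemeasurable (hGm.pow_const (q - 1)).aemeasurable).trans ?_
          simp only [← ENNReal.rpow_mul, hexp]
          exact le_rfl
      _ = T * I ^ (1 / q') := by
          rw [lintegral_mul_const]
          have : Measurable (fun t => ∫⁻ x, f x t ^ q ∂μ) := by
            have h2 : Measurable (Function.uncurry fun t x => f x t ^ q) :=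
              (hf.comp measurable_swap).pow_const q
            exact h2.lintegral_prod_right
          exact this.pow_const _
  rcases eq_or_ne I 0 with h0 | h0
  · rw [h0, ENNReal.zero_rpow_of_pos (by positivity)]; exact zero_le
  · have h2 : I = I ^ (1 / q) * I ^ (1 / q') := by
      rw [← ENNReal.rpow_add _ _ h0 hfin]
      have := hconj.inv_add_inv_eq_one
      rw [one_div, one_div, this, ENNReal.rpow_one]
    have h3 : I ^ (1 / q') ≠ 0 := by
      intro h; rw [h, mul_zero] at h2; exact h0 h2
    have h4 : I ^ (1 / q') ≠ ⊤ := ENNReal.rpow_ne_top_of_nonneg (by have := hconj.symm.pos; positivity) hfin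
    have h5 : I ^ (1 / q) * I ^ (1 / q') ≤ T * I ^ (1 / q') := h2 ▸ h1
    exact (ENNReal.mul_le_mul_iff_left h3 h4).1 h5

lemma LpL2_le {n : ℕ} (hn : 2 ≤ n) (u : SchwartzMap (Eu n) ℂ) {p : ℝ} (hp : 2 < p)
    (B : ℝ → ℝ) (hB : Integrable B) (hB0 : ∀ τ, 0 ≤ B τ)
    (hi : ∀ τ, Integrable (fun x => ‖Wf u τ x‖ ^ p))
    (hle : ∀ τ, (∫ x, ‖Wf u τ x‖ ^ p) ^ (2 / p) ≤ B τ) :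
    LpL2Norm p (halfWave u) ≤ (∫ τ, B τ) ^ (1 / 2 : ℝ) := by
  have hp0 : 0 < p := by linarith
  have hBi : 0 ≤ ∫ τ, B τ := integral_nonneg hB0
  rw [LpL2Norm]
  simp only [(halfWave_fourier hn u _).2]
  by_cases hint : Integrable (fun x => (∫ τ, ‖Wf u τ x‖ ^ 2) ^ (p / 2))
  swap
  · rw [integral_undef hint, zero_rpow (by positivity)]; positivity
  set f : Eu n → ℝ → ENNReal := fun x τ => ENNReal.ofReal (‖Wf u τ x‖ ^ 2) with hf
  have hW := Wf_cont u
  have hfm : Measurable (Function.uncurry f) := by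
    have : Continuous (fun q : Eu n × ℝ => ‖Wf u q.2 q.1‖ ^ 2) :=
      ((hW.comp continuous_swap).norm).pow 2
    exact this.measurable.ennreal_ofReal
  have hG0 : ∀ x, 0 ≤ ∫ τ, ‖Wf u τ x‖ ^ 2 := fun x => integral_nonneg fun τ => by positivity
  have hsq : ∀ x, Integrable (fun τ => ‖Wf u τ x‖ ^ 2) := by
    intro x
    obtain ⟨C, hC, hb⟩ := Wf_bound hn u
    have hc : Continuous (fun τ => Wf u τ x) := (Wf_cont u).comp (f := fun τ => (τ, x)) (by fun_prop)
    refine (integrable_w.const_mul (C ^ 2)).mono' (hc.norm.pow 2).aestronglyMeasurable (ae_of_all _ fun τ => ?_)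
    rw [norm_of_nonneg (by positivity)]
    have h1 : (1 + ‖τ‖) ^ (-2:ℝ) ≤ 1 := rpow_le_one_of_one_le_of_nonpos (by simp) (by norm_num)
    have h2 : 0 ≤ (1 + ‖τ‖) ^ (-2:ℝ) := by positivity
    calc ‖Wf u τ x‖ ^ 2 ≤ (C * (1 + ‖τ‖) ^ (-2 : ℝ)) ^ 2 := by gcongr; exact hb τ x
      _ = C ^ 2 * ((1 + ‖τ‖) ^ (-2 : ℝ) * (1 + ‖τ‖) ^ (-2 : ℝ)) := by ring
      _ ≤ C ^ 2 * (1 + ‖τ‖) ^ (-2 : ℝ) := by gcongr; nlinarith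
  have hG : ∀ x, ∫⁻ τ, f x τ = ENNReal.ofReal (∫ τ, ‖Wf u τ x‖ ^ 2) := fun x => by
    rw [ofReal_integral_eq_lintegral_ofReal (hsq x) (ae_of_all _ fun τ => by positivity)]
  have hI : ∫⁻ x, (∫⁻ τ, f x τ) ^ (p / 2) = ENNReal.ofReal (∫ x, (∫ τ, ‖Wf u τ x‖ ^ 2) ^ (p / 2)) := by
    rw [ofReal_integral_eq_lintegral_ofReal hint (ae_of_all _ fun x => by have := hG0 x; positivity)]
    congr 1; ext x
    rw [hG, ENNReal.ofReal_rpow_of_nonneg (hG0 x) (by positivity)]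
  have key := minkowski_aux volume volume f hfm (q := p / 2) (by linarith) (by rw [hI]; exact ENNReal.ofReal_ne_top)
  have hR : ∫⁻ τ, (∫⁻ x, f x τ ^ (p / 2)) ^ (1 / (p / 2)) ≤ ENNReal.ofReal (∫ τ, B τ) := by
    rw [ofReal_integral_eq_lintegral_ofReal hB (ae_of_all _ hB0)]
    refine lintegral_mono fun τ => ?_
    have e1 : ∫⁻ x, f x τ ^ (p / 2) = ENNReal.ofReal (∫ x, ‖Wf u τ x‖ ^ p) := by
      rw [ofReal_integral_eq_lintegral_ofReal (hi τ) (ae_of_all _ fun x => by positivity)]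
      congr 1; ext x
      rw [hf]
      simp only
      rw [ENNReal.ofReal_rpow_of_nonneg (by positivity) (by positivity), ← rpow_two, ← rpow_mul (norm_nonneg _),
        mul_div_cancel₀ _ (two_ne_zero)]
    rw [e1, ENNReal.ofReal_rpow_of_nonneg (integral_nonneg fun x => by positivity) (by positivity), one_div_div]
    exact ENNReal.ofReal_le_ofReal (hle τ)
  have fin := key.trans hR
  have hI0 : 0 ≤ ∫ x, (∫ τ, ‖Wf u τ x‖ ^ 2) ^ (p / 2) := integral_nonneg fun x => by have := hG0 x; positivity
  rw [hI, ENNReal.ofReal_rpow_of_nonneg hI0 (by positivity), ENNReal.ofReal_le_ofReal_iff hBi] at fin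
  have : (∫ x, (∫ τ, ‖Wf u τ x‖ ^ 2) ^ (p / 2)) ^ (1 / p) =
      ((∫ x, (∫ τ, ‖Wf u τ x‖ ^ 2) ^ (p / 2)) ^ (1 / (p / 2))) ^ (1 / 2 : ℝ) := by
    rw [← rpow_mul hI0]; congr 1; field_simp
  rw [this]
  exact rpow_le_rpow (by positivity) fin (by norm_num)

lemma Hdot_le_Hs {n : ℕ} {u v : SchwartzMap (Eu n) ℂ} {k s : ℝ} (hs : 0 ≤ s)
    (h : ∀ ξ, 𝓕 (⇑v) ξ = ((1 + ‖ξ‖ ^ 2) ^ (k / 2) : ℝ) * 𝓕 (⇑u) ξ) :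
    HdotNorm s v ≤ HsNorm (k + s) u := by
  obtain ⟨w, hw⟩ := multiplier u ((k + s) / 2)
  have hpt : ∀ (a : ℝ) (ξ : Eu n), ‖(((1 + ‖ξ‖ ^ 2) ^ (a / 2) : ℝ) : ℂ) * 𝓕 (⇑u) ξ‖ ^ 2 = (1 + ‖ξ‖ ^ 2) ^ a * ‖𝓕 (⇑u) ξ‖ ^ 2 := by
    intro a ξ
    rw [norm_mul, Complex.norm_real, norm_of_nonneg (by positivity), mul_pow, ← rpow_natCast ((1 + ‖ξ‖ ^ 2) ^ (a / 2)), ← rpow_mul (by positivity)]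
    congr 2; push_cast; ring
  have hi : Integrable (fun ξ : Eu n => (1 + ‖ξ‖ ^ 2) ^ (k + s) * ‖𝓕 (⇑u) ξ‖ ^ 2) := by
    have h1 : MemLp (𝓕 (⇑w)) 2 volume := (𝓕 w : SchwartzMap (Eu n) ℂ).memLp 2 volume
    have h2 := (memLp_two_iff_integrable_sq_norm h1.aestronglyMeasurable).1 h1
    refine h2.congr (ae_of_all _ fun ξ => ?_)
    simp only [hw, hpt]
  rw [HdotNorm, HsNorm]
  refine rpow_le_rpow (integral_nonneg fun ξ => by positivity) ?_ (by norm_num)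
  refine integral_mono_of_nonneg (ae_of_all _ fun ξ => ?_) hi (ae_of_all _ fun ξ => ?_)
  · simp only [Pi.zero_apply]; positivity
  simp only [h, hpt]
  rw [rpow_add (show (0:ℝ) < 1 + ‖ξ‖ ^ 2 by positivity), mul_comm ((1 + ‖ξ‖ ^ 2) ^ k) ((1 + ‖ξ‖ ^ 2) ^ s), mul_assoc]
  refine mul_le_mul_of_nonneg_right ?_ (show 0 ≤ (1 + ‖ξ‖ ^ 2) ^ k * ‖𝓕 (⇑u) ξ‖ ^ 2 by positivity)
  rw [rpow_mul (norm_nonneg _), rpow_two]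
  exact rpow_le_rpow (by positivity) (by linarith [sq_nonneg ‖ξ‖]) hs


end

theorem LpL2_estimate_of_square_function_bound
    (hn : 2 ≤ n) (k p : ℝ) (hk : 0 ≤ k) (hp' : 0 < p)
    (hp₁ : 1 / p ≤ ((n : ℝ) - 1) / (2 * ((n : ℝ) + 1)))
    (hp₂ : ((n : ℝ) - 1) / (2 * ((n : ℝ) + 1)) - k / n ≤ 1 / p)
    (hKMBT : ∃ C > (0 : ℝ), ∀ u₀ : SchwartzMap (EuclideanSpace ℝ (Fin n)) ℂ,
      L2LrNorm (2 * ((n : ℝ) + 1) / ((n : ℝ) - 1))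
          (fun τ x => 𝓕 (fun t => halfWave u₀ t x) τ)
        ≤ C * HdotNorm (((n : ℝ) - 1) / (2 * ((n : ℝ) + 1))) (⇑u₀)) :
    ∃ C > (0 : ℝ), ∀ u₀ : SchwartzMap (EuclideanSpace ℝ (Fin n)) ℂ,
      LpL2Norm p (halfWave u₀)
        ≤ C * HsNorm (k + ((n : ℝ) - 1) / (2 * ((n : ℝ) + 1))) (⇑u₀) := by
  have hn' : (2 : ℝ) ≤ n := by exact_mod_cast hn
  have hn1 : (0 : ℝ) < (n : ℝ) - 1 := by linarith
  obtain ⟨C0, hC0, hK⟩ := hKMBT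
  obtain ⟨r, hrdef⟩ : ∃ r : ℝ, r = 2 * ((n : ℝ) + 1) / ((n : ℝ) - 1) := ⟨_, rfl⟩
  obtain ⟨s, hsdef⟩ : ∃ s : ℝ, s = ((n : ℝ) - 1) / (2 * ((n : ℝ) + 1)) := ⟨_, rfl⟩
  rw [← hrdef, ← hsdef] at hK
  rw [← hsdef] at hp₁ hp₂ ⊢
  have hsr : s = 1 / r := by rw [hsdef, hrdef, one_div_div]
  have hr2 : 2 < r := by
    rw [hrdef, lt_div_iff₀ hn1]; linarith
  have hr0 : 0 < r := by linarith
  have hs0 : 0 ≤ s := by rw [hsr]; positivity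
  have hrp : r ≤ p := by
    rw [hsr] at hp₁
    exact le_of_one_div_le_one_div hp' hp₁
  have hrn : ((n : ℝ) - 1) / 2 * r = n + 1 := by
    rw [hrdef]; field_simp
  obtain ⟨D, hD, hB⟩ := bernstein_Lp (n := n) (r := r) (p := p) (by linarith) hrp
  refine ⟨(D ^ (1 / 2 : ℝ) + 1) * C0, by positivity, fun u₀ => ?_⟩
  obtain ⟨v, hv⟩ := multiplier u₀ (k / 2)
  have hAi := Wf_L2Lr hn v r hr0 hrn
  obtain ⟨D1, hD1, hu⟩ := Wf_Lr hn u₀ r hr0 hrn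
  have hW : L2LrNorm r (fun τ x => 𝓕 (fun t => halfWave v t x) τ)
      = (∫ τ, (∫ x, ‖Wf v τ x‖ ^ r) ^ (2 / r)) ^ (1 / 2 : ℝ) := by
    simp only [L2LrNorm, (halfWave_fourier hn v _).1]
  have hKv := hK v
  rw [hW] at hKv
  have hA0 : ∀ (w : SchwartzMap (EuclideanSpace ℝ (Fin n)) ℂ) (q : ℝ) τ, 0 ≤ ∫ x, ‖Wf w τ x‖ ^ q :=
    fun w q τ => integral_nonneg fun x => by positivity
  have hexp : (n : ℝ) * (1 / r - 1 / p) ≤ k := by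
    have h1 : 1 / r - 1 / p ≤ k / n := by rw [← hsr]; linarith
    calc (n : ℝ) * (1 / r - 1 / p) ≤ n * (k / n) := by gcongr
      _ = k := by field_simp
  have hexp0 : 0 ≤ (n : ℝ) * (1 / r - 1 / p) := by
    have : 0 ≤ 1 / r - 1 / p := by rw [← hsr]; linarith
    positivity
  have main := LpL2_le hn u₀ (p := p) (by linarith)
    (fun τ => D * (∫ x, ‖Wf v τ x‖ ^ r) ^ (2 / r)) (hAi.const_mul D)
    (fun τ => by have := hA0 v r τ; positivity) ?_ ?_
  · refine main.trans ?_
    have hI0 : 0 ≤ ∫ τ, (∫ x, ‖Wf v τ x‖ ^ r) ^ (2 / r) :=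
      integral_nonneg fun τ => by have := hA0 v r τ; positivity
    rw [integral_const_mul, mul_rpow hD hI0]
    have h1 := hKv.trans (mul_le_mul_of_nonneg_left (Hdot_le_Hs (u := u₀) (v := v) (k := k) hs0 hv) hC0.le)
    calc D ^ (1 / 2 : ℝ) * (∫ τ, (∫ x, ‖Wf v τ x‖ ^ r) ^ (2 / r)) ^ (1 / 2 : ℝ)
        ≤ (D ^ (1 / 2 : ℝ) + 1) * (∫ τ, (∫ x, ‖Wf v τ x‖ ^ r) ^ (2 / r)) ^ (1 / 2 : ℝ) := by
          gcongr; linarith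
      _ ≤ (D ^ (1 / 2 : ℝ) + 1) * (C0 * HsNorm (k + s) (⇑u₀)) := by gcongr
      _ = _ := by ring
  · intro τ
    rcases le_or_gt τ 0 with hτ | hτ
    · simp only [Wf_neg hn u₀ hτ, norm_zero, zero_rpow hp'.ne']
      exact integrable_zero _ _ _
    · exact (hB u₀ τ hτ (hu τ).1).1
  · intro τ
    rcases le_or_gt τ 0 with hτ | hτ
    · simp only [Wf_neg hn u₀ hτ, norm_zero, zero_rpow hp'.ne', integral_zero]
      rw [zero_rpow (by positivity)]
      have := hA0 v r τ
      positivity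
    · refine (hB u₀ τ hτ (hu τ).1).2.trans ?_
      rw [mul_assoc]
      refine mul_le_mul_of_nonneg_left ?_ hD
      have h0 : 0 < 2 * π * τ := by positivity
      have e1 : ∫ x, ‖Wf v τ x‖ ^ r = ((1 + (2 * π * τ) ^ 2) ^ (k / 2)) ^ r * ∫ x, ‖Wf u₀ τ x‖ ^ r := by
        rw [← integral_const_mul]
        congr 1
        ext x
        rw [Wf_mul hv, norm_mul, Complex.norm_real, norm_of_nonneg (by positivity),
          mul_rpow (by positivity) (norm_nonneg _)]
      rw [e1, mul_rpow (by positivity) (hA0 u₀ r τ)]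
      refine mul_le_mul_of_nonneg_right ?_ (by have := hA0 u₀ r τ; positivity)
      rw [← rpow_mul (by positivity), ← rpow_mul (by positivity)]
      have e2 : k / 2 * (r * (2 / r)) = k := by field_simp
      rw [e2, rpow_mul h0.le, rpow_two]
      calc ((2 * π * τ) ^ 2) ^ ((n : ℝ) * (1 / r - 1 / p))
          ≤ (1 + (2 * π * τ) ^ 2) ^ ((n : ℝ) * (1 / r - 1 / p)) := by
            gcongr; linarith
        _ ≤ (1 + (2 * π * τ) ^ 2) ^ k :=
            rpow_le_rpow_of_exponent_le (by linarith [sq_nonneg (2 * π * τ)]) hexp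
end

section
/- Let n ≥ 3 and s > n/2 - 1. For Schwartz functions f, g on ℝ^n define ‖f‖_X := ‖∇f‖_{H^s}. Then there is a constant c₁ such that ‖fg‖_{H^{s}} ≤ c₁ ‖f‖_X ‖g‖_{H^{s}}. -/
open FourierTransform MeasureTheory

variable {n : ℕ}

/-- The norm `‖f‖_X = ‖∇f‖_{H^s} = ‖ |ξ| ⟨ξ⟩^s 𝓕f ‖_{L²}`. -/
noncomputable def XNorm (s : ℝ) (f : EuclideanSpace ℝ (Fin n) → ℂ) : ℝ :=
  (∫ ξ : EuclideanSpace ℝ (Fin n),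
    ‖ξ‖ ^ 2 * (1 + ‖ξ‖ ^ 2) ^ s * ‖𝓕 f ξ‖ ^ 2) ^ (1 / 2 : ℝ)


lemma aux_cs {α : Type*} [MeasurableSpace α] (μ : Measure α) {a b : α → ENNReal}
    (ha : AEMeasurable a μ) (hb : AEMeasurable b μ) :
    (∫⁻ x, a x * b x ∂μ) ^ 2 ≤ (∫⁻ x, a x ^ 2 ∂μ) * ∫⁻ x, b x ^ 2 ∂μ := by
  have h := ENNReal.lintegral_mul_le_Lp_mul_Lq μ Real.HolderConjugate.two_two ha hb
  simp only [Pi.mul_apply, ENNReal.rpow_two] at h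
  calc _ ≤ _ := pow_le_pow_left' h 2
    _ = _ := by
      rw [mul_pow, ← ENNReal.rpow_natCast, ← ENNReal.rpow_natCast, ← ENNReal.rpow_mul,
        ← ENNReal.rpow_mul]
      norm_num

lemma aux_young {u v : EuclideanSpace ℝ (Fin n) → ENNReal} (hu : Measurable u)
    (hv : Measurable v) :
    ∫⁻ ξ, (∫⁻ η, u (ξ - η) * v η) ^ 2 ≤ (∫⁻ x, u x) ^ 2 * ∫⁻ x, v x ^ 2 := by
  have h1 : ∀ ξ, (∫⁻ η, u (ξ - η) * v η) ^ 2 ≤ (∫⁻ x, u x) * ∫⁻ η, u (ξ - η) * v η ^ 2 := by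
    intro ξ
    have hu' : Measurable fun η => u (ξ - η) := hu.comp (by fun_prop)
    have h := aux_cs volume (a := fun η => u (ξ - η) ^ (1 / 2 : ℝ))
      (b := fun η => u (ξ - η) ^ (1 / 2 : ℝ) * v η) (by fun_prop) (by fun_prop)
    have e : ∀ t : ENNReal, t ^ (1 / 2 : ℝ) * t ^ (1 / 2 : ℝ) = t := by
      intro t
      rw [← ENNReal.rpow_add_of_nonneg _ _ (by norm_num) (by norm_num)]; norm_num
    simp only [mul_pow, ← mul_assoc, e] at h
    simp only [pow_two (_ ^ (1 / 2 : ℝ)), e] at h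
    rwa [lintegral_sub_left_eq_self u ξ] at h
  calc _ ≤ ∫⁻ ξ, (∫⁻ x, u x) * ∫⁻ η, u (ξ - η) * v η ^ 2 := lintegral_mono h1
    _ = (∫⁻ x, u x) * ∫⁻ ξ, ∫⁻ η, u (ξ - η) * v η ^ 2 := by
      rw [lintegral_const_mul]
      apply Measurable.lintegral_prod_right'
        (f := fun p : EuclideanSpace ℝ (Fin n) × EuclideanSpace ℝ (Fin n) => u (p.1 - p.2) * v p.2 ^ 2)
      fun_prop
    _ = (∫⁻ x, u x) * ∫⁻ η, ∫⁻ ξ, u (ξ - η) * v η ^ 2 := by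
      rw [lintegral_lintegral_swap]
      apply Measurable.aemeasurable
      simp only [Function.uncurry_def]
      fun_prop
    _ = (∫⁻ x, u x) * ∫⁻ η, (∫⁻ x, u x) * v η ^ 2 := by
      congr 1
      refine lintegral_congr fun η => ?_
      rw [lintegral_mul_const _ (by fun_prop), lintegral_sub_right_eq_self u η]
    _ = _ := by
      rw [lintegral_const_mul _ (by fun_prop)]; ring

lemma aux_fourier (f g : SchwartzMap (EuclideanSpace ℝ (Fin n)) ℂ) (ξ : EuclideanSpace ℝ (Fin n)) :
    𝓕 (fun x => f x * g x) ξ = ∫ η, 𝓕 (⇑f) (ξ - η) * 𝓕 (⇑g) η := by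
  have h := SchwartzMap.convolution_apply (ContinuousLinearMap.mul ℂ ℂ) (𝓕 f) (𝓕 g) ξ
  rw [MeasureTheory.convolution_eq_swap] at h
  simp only [ContinuousLinearMap.mul_apply', SchwartzMap.fourier_coe] at h
  rw [← h]
  have h2 : ∀ (f : SchwartzMap (EuclideanSpace ℝ (Fin n)) ℂ) x, (𝓕 (𝓕 f)) x = f (-x) := by
    intro f x
    have : (𝓕⁻ (𝓕 f)) (-x) = f (-x) := by simp
    rw [← this, SchwartzMap.fourierInv_coe, Real.fourierInv_eq_fourier_neg, neg_neg, SchwartzMap.fourier_coe]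
  change _ = (𝓕⁻ (SchwartzMap.pairing (ContinuousLinearMap.mul ℂ ℂ) (𝓕 (𝓕 f)) (𝓕 (𝓕 g)))) ξ
  rw [SchwartzMap.fourierInv_coe, Real.fourierInv_eq_fourier_comp_neg]
  have h3 : (fun x => f x * g x) = fun x => (SchwartzMap.pairing (ContinuousLinearMap.mul ℂ ℂ)
      (𝓕 (𝓕 f)) (𝓕 (𝓕 g))) (-x) := by
    ext x
    simp only [SchwartzMap.pairing_apply_apply, h2, neg_neg, ContinuousLinearMap.mul_apply']
  rw [h3]

noncomputable def auxW (s : ℝ) (x : EuclideanSpace ℝ (Fin n)) : ℝ := (1 + ‖x‖ ^ 2) ^ (s / 2)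

lemma auxW_pos (s : ℝ) (x : EuclideanSpace ℝ (Fin n)) : 0 < auxW s x := by
  unfold auxW; positivity

lemma auxW_one (s : ℝ) (hs : 0 ≤ s) (x : EuclideanSpace ℝ (Fin n)) : 1 ≤ auxW s x := by
  unfold auxW; apply Real.one_le_rpow <;> nlinarith [sq_nonneg ‖x‖]

lemma auxW_sq (s : ℝ) (x : EuclideanSpace ℝ (Fin n)) : auxW s x ^ 2 = (1 + ‖x‖ ^ 2) ^ s := by
  unfold auxW
  rw [← Real.rpow_natCast, ← Real.rpow_mul (by positivity)]; congr 1; push_cast; ring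

lemma auxW_meas (s : ℝ) : Measurable (auxW s : EuclideanSpace ℝ (Fin n) → ℝ) := by
  unfold auxW; fun_prop

lemma auxW_add (s : ℝ) (hs : 0 ≤ s) (a b : EuclideanSpace ℝ (Fin n)) (h : ‖a‖ ≤ ‖b‖) :
    auxW s (a + b) ≤ 2 ^ s * auxW s b := by
  unfold auxW
  have : (2 : ℝ) ^ s = 4 ^ (s / 2) := by
    rw [show (4 : ℝ) = 2 ^ (2 : ℝ) by norm_num, ← Real.rpow_mul (by norm_num)]; congr 1; ring
  rw [this, ← Real.mul_rpow (by norm_num) (by positivity)]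
  apply Real.rpow_le_rpow (by positivity) _ (by positivity)
  have h1 := norm_add_le a b
  nlinarith [norm_nonneg (a + b), norm_nonneg a, norm_nonneg b]

noncomputable def auxk (s : ℝ) (x : EuclideanSpace ℝ (Fin n)) : ℝ := (‖x‖ * auxW s x)⁻¹

lemma auxk_meas (s : ℝ) : Measurable (auxk s : EuclideanSpace ℝ (Fin n) → ℝ) := by
  have := auxW_meas (n := n) s
  unfold auxk; fun_prop

lemma auxk_nonneg (s : ℝ) (x : EuclideanSpace ℝ (Fin n)) : 0 ≤ auxk s x := by
  have := auxW_pos s x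
  unfold auxk; positivity

lemma aux_pointwise (s : ℝ) (hs : 0 ≤ s) (a b : EuclideanSpace ℝ (Fin n)) (ha : a ≠ 0)
    (hb : b ≠ 0) :
    auxW s (a + b) ≤ 2 ^ s * ((‖a‖ * auxW s a) * auxW s b * (auxk s a + auxk s b)) := by
  have ha' := norm_pos_iff.2 ha
  have hb' := norm_pos_iff.2 hb
  have wa := auxW_pos s a
  have wb := auxW_pos s b
  have ka := auxk_nonneg s a
  have kb := auxk_nonneg s b
  rcases le_total ‖a‖ ‖b‖ with h | h
  · refine (auxW_add s hs a b h).trans ?_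
    gcongr
    have : auxW s b = (‖a‖ * auxW s a) * auxW s b * auxk s a := by
      unfold auxk; field_simp
    calc _ = _ := this
      _ ≤ _ := by gcongr; linarith
  · rw [add_comm a b]
    refine (auxW_add s hs b a h).trans ?_
    gcongr
    calc auxW s a ≤ (‖a‖ / ‖b‖) * auxW s a := by
          rw [le_mul_iff_one_le_left wa, one_le_div hb']; exact h
      _ = (‖a‖ * auxW s a) * auxW s b * auxk s b := by
          unfold auxk; field_simp
      _ ≤ _ := by gcongr; linarith

lemma auxk_int (hn : 3 ≤ n) (s : ℝ) (hs : s > (n : ℝ) / 2 - 1) :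
    Integrable (fun x : EuclideanSpace ℝ (Fin n) => auxk s x ^ 2) := by
  have : Nonempty (Fin n) := ⟨⟨0, by omega⟩⟩
  have hn' : (3 : ℝ) ≤ n := by exact_mod_cast hn
  have hs0 : 0 ≤ s := by linarith
  have e : (fun x : EuclideanSpace ℝ (Fin n) => auxk s x ^ 2) =
      fun x => (fun y : ℝ => (y ^ 2 * (1 + y ^ 2) ^ s)⁻¹) ‖x‖ := by
    ext x
    simp only [auxk, inv_pow, mul_pow, auxW_sq]
  rw [e, integrable_fun_norm_addHaar volume (f := fun y : ℝ => (y ^ 2 * (1 + y ^ 2) ^ s)⁻¹)]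
  simp only [finrank_euclideanSpace, Fintype.card_fin, smul_eq_mul]
  rw [← Set.Ioc_union_Ioi_eq_Ioi (zero_le_one' ℝ)]
  have hm : Measurable fun y : ℝ => y ^ (n - 1) * (y ^ 2 * (1 + y ^ 2) ^ s)⁻¹ := by fun_prop
  have hsplit : ∀ y : ℝ, 0 < y →
      y ^ (n - 1) * (y ^ 2 * (1 + y ^ 2) ^ s)⁻¹ = y ^ (n - 3) * ((1 + y ^ 2) ^ s)⁻¹ := by
    intro y hy
    obtain ⟨m, rfl⟩ := Nat.exists_eq_add_of_le hn
    rw [show 3 + m - 1 = m + 2 by omega, show 3 + m - 3 = m by omega, pow_add]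
    field_simp
  apply IntegrableOn.union
  · apply Measure.integrableOn_of_bounded (M := 1) (by simp) hm.aestronglyMeasurable
    filter_upwards [ae_restrict_mem measurableSet_Ioc] with y hy
    rw [hsplit y hy.1, Real.norm_of_nonneg (by have := hy.1; positivity)]
    apply mul_le_one₀ (pow_le_one₀ hy.1.le hy.2) (by positivity)
    apply inv_le_one_of_one_le₀
    apply Real.one_le_rpow _ hs0
    nlinarith [sq_nonneg y]
  · have hi : IntegrableOn (fun y : ℝ => y ^ ((n : ℝ) - 3 - 2 * s)) (Set.Ioi 1) :=
      integrableOn_Ioi_rpow_of_lt (by linarith) one_pos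
    apply Integrable.mono' hi hm.aestronglyMeasurable
    filter_upwards [ae_restrict_mem measurableSet_Ioi] with y hy
    have hy0 : 0 < y := lt_trans one_pos hy
    rw [hsplit y hy0, Real.norm_of_nonneg (by positivity), Real.rpow_sub hy0, div_eq_mul_inv]
    rw [show (n : ℝ) - 3 = ((n - 3 : ℕ) : ℝ) by push_cast [hn]; ring, Real.rpow_natCast,
      Real.rpow_mul hy0.le, Real.rpow_two]
    gcongr
    linarith

lemma aux_schwartz_int (s : ℝ) (F : SchwartzMap (EuclideanSpace ℝ (Fin n)) ℂ) :
    Integrable (fun x => (1 + ‖x‖ ^ 2) ^ s * ‖F x‖ ^ 2) := by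
  obtain ⟨N, hN⟩ := exists_nat_ge s
  have hg : Function.HasTemperateGrowth (fun x : EuclideanSpace ℝ (Fin n) => (1 + ‖x‖ ^ 2) ^ N) := by
    fun_prop
  have h1 := ((SchwartzMap.smulLeftCLM ℂ (fun x : EuclideanSpace ℝ (Fin n) => (1 + ‖x‖ ^ 2) ^ N) F).memLp 2).integrable_norm_pow (by norm_num)
  simp only [SchwartzMap.smulLeftCLM_apply_apply hg] at h1
  refine h1.mono' ?_ ?_
  · have := F.continuous.measurable
    exact Measurable.aestronglyMeasurable (by fun_prop)
  · filter_upwards with x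
    have one : 1 ≤ 1 + ‖x‖ ^ 2 := by nlinarith [sq_nonneg ‖x‖]
    rw [Real.norm_of_nonneg (by positivity), norm_smul, mul_pow]
    gcongr
    · rw [Real.norm_of_nonneg (by positivity)]
      calc (1 + ‖x‖ ^ 2) ^ s ≤ (1 + ‖x‖ ^ 2) ^ (N : ℝ) := Real.rpow_le_rpow_of_exponent_le one hN
        _ = (1 + ‖x‖ ^ 2) ^ N := Real.rpow_natCast _ _
        _ ≤ _ := le_self_pow₀ (one_le_pow₀ one) (by norm_num)

lemma aux_sq_add (a b : ENNReal) : (a + b) ^ 2 ≤ 4 * (a ^ 2 + b ^ 2) := by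
  rcases le_total a b with h | h
  · calc (a + b) ^ 2 ≤ (b + b) ^ 2 := by gcongr
      _ = 4 * b ^ 2 := by ring
      _ ≤ _ := by gcongr; exact le_add_self
  · calc (a + b) ^ 2 ≤ (a + a) ^ 2 := by gcongr
      _ = 4 * a ^ 2 := by ring
      _ ≤ _ := by gcongr; exact le_self_add

lemma aux_sum_young {κ F G : EuclideanSpace ℝ (Fin n) → ENNReal} (hκ : Measurable κ)
    (hF : Measurable F) (hG : Measurable G) :
    ∫⁻ ξ, (∫⁻ η, F (ξ - η) * G η * (κ (ξ - η) + κ η)) ^ 2 ≤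
      8 * (∫⁻ x, κ x ^ 2) * (∫⁻ x, F x ^ 2) * ∫⁻ x, G x ^ 2 := by
  have hFm : ∀ ξ, Measurable fun η => F (ξ - η) := fun ξ => hF.comp (by fun_prop)
  have hκm : ∀ ξ, Measurable fun η => κ (ξ - η) := fun ξ => hκ.comp (by fun_prop)
  have h1 : ∀ ξ, ∫⁻ η, F (ξ - η) * G η * (κ (ξ - η) + κ η) =
      (∫⁻ η, (κ (ξ - η) * F (ξ - η)) * G η) + ∫⁻ η, (κ (ξ - η) * G (ξ - η)) * F η := by
    intro ξ
    have : ∫⁻ η, (κ (ξ - η) * G (ξ - η)) * F η = ∫⁻ η, (κ η * G η) * F (ξ - η) := by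
      rw [← lintegral_sub_left_eq_self _ ξ]
      simp
    have h1 := hFm ξ
    have h2 := hκm ξ
    rw [this, ← lintegral_add_left (by fun_prop)]
    refine lintegral_congr fun η => ?_
    ring
  have y1 := aux_young (u := fun x => κ x * F x) (v := G) (by fun_prop) hG
  have y2 := aux_young (u := fun x => κ x * G x) (v := F) (by fun_prop) hF
  have c1 := aux_cs volume hκ.aemeasurable hF.aemeasurable
  have c2 := aux_cs volume hκ.aemeasurable hG.aemeasurable
  simp_rw [h1]
  have hm : Measurable fun ξ => (∫⁻ η, (κ (ξ - η) * F (ξ - η)) * G η) ^ 2 := by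
    apply Measurable.pow_const
    apply Measurable.lintegral_prod_right'
      (f := fun p : EuclideanSpace ℝ (Fin n) × EuclideanSpace ℝ (Fin n) =>
        κ (p.1 - p.2) * F (p.1 - p.2) * G p.2)
    fun_prop
  calc _ ≤ ∫⁻ ξ, 4 * ((∫⁻ η, (κ (ξ - η) * F (ξ - η)) * G η) ^ 2 +
        (∫⁻ η, (κ (ξ - η) * G (ξ - η)) * F η) ^ 2) := lintegral_mono fun ξ => aux_sq_add _ _
    _ = 4 * ((∫⁻ ξ, (∫⁻ η, (κ (ξ - η) * F (ξ - η)) * G η) ^ 2) +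
        ∫⁻ ξ, (∫⁻ η, (κ (ξ - η) * G (ξ - η)) * F η) ^ 2) := by
      rw [lintegral_const_mul' _ _ (by norm_num), lintegral_add_left hm]
    _ ≤ 4 * ((∫⁻ x, κ x ^ 2) * (∫⁻ x, F x ^ 2) * (∫⁻ x, G x ^ 2) +
        (∫⁻ x, κ x ^ 2) * (∫⁻ x, G x ^ 2) * (∫⁻ x, F x ^ 2)) := by
      gcongr
      · exact y1.trans (by gcongr)
      · exact y2.trans (by gcongr)
    _ = _ := by ring

lemma aux_main (hn : 3 ≤ n) (s : ℝ) (hs : 0 ≤ s)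
    (f g : SchwartzMap (EuclideanSpace ℝ (Fin n)) ℂ) (ξ : EuclideanSpace ℝ (Fin n)) :
    ENNReal.ofReal (auxW s ξ * ‖𝓕 (fun x => f x * g x) ξ‖) ≤
      ENNReal.ofReal (2 ^ s) * ∫⁻ η, ENNReal.ofReal (‖ξ - η‖ * auxW s (ξ - η) * ‖𝓕 (⇑f) (ξ - η)‖) *
        ENNReal.ofReal (auxW s η * ‖𝓕 (⇑g) η‖) *
        (ENNReal.ofReal (auxk s (ξ - η)) + ENNReal.ofReal (auxk s η)) := by
  have : Nonempty (Fin n) := ⟨⟨0, by omega⟩⟩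
  rw [aux_fourier, ENNReal.ofReal_mul (auxW_pos s ξ).le, ofReal_norm]
  calc _ ≤ ENNReal.ofReal (auxW s ξ) * ∫⁻ η, ‖𝓕 (⇑f) (ξ - η) * 𝓕 (⇑g) η‖ₑ := by
        gcongr; exact enorm_integral_le_lintegral_enorm _
    _ = ∫⁻ η, ENNReal.ofReal (auxW s ξ) * ‖𝓕 (⇑f) (ξ - η) * 𝓕 (⇑g) η‖ₑ := by
        rw [lintegral_const_mul' _ _ (by simp)]
    _ ≤ _ := by
        rw [← lintegral_const_mul' _ _ (by simp)]
        apply lintegral_mono_ae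
        filter_upwards [Measure.ae_ne volume ξ, Measure.ae_ne volume 0] with η h1 h2
        have wa := auxW_pos s (ξ - η)
        have wb := auxW_pos s η
        have ka := auxk_nonneg s (ξ - η)
        have kb := auxk_nonneg s η
        have hp := aux_pointwise s hs (ξ - η) η (sub_ne_zero.2 h1.symm) h2
        rw [sub_add_cancel] at hp
        rw [← ofReal_norm, ← ENNReal.ofReal_mul (auxW_pos s ξ).le, ← ENNReal.ofReal_add ka kb,
          ← ENNReal.ofReal_mul (by positivity), ← ENNReal.ofReal_mul (by positivity),
          ← ENNReal.ofReal_mul (by positivity)]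
        apply ENNReal.ofReal_le_ofReal
        rw [norm_mul]
        calc _ ≤ _ := mul_le_mul_of_nonneg_right hp (by positivity)
          _ = _ := by ring

theorem product_estimate_X_Hs (hn : 3 ≤ n) (s : ℝ) (hs : s > (n : ℝ) / 2 - 1) :
    ∃ c₁ > (0 : ℝ), ∀ f g : SchwartzMap (EuclideanSpace ℝ (Fin n)) ℂ,
      HsNorm s (fun x => f x * g x) ≤ c₁ * XNorm s (⇑f) * HsNorm s (⇑g) := by
  have hn' : (3 : ℝ) ≤ n := by exact_mod_cast hn
  have hs0 : 0 ≤ s := by linarith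
  set A : ℝ := ∫ x : EuclideanSpace ℝ (Fin n), auxk s x ^ 2 with hA
  have hA0 : 0 ≤ A := integral_nonneg fun x => by positivity
  set K : ℝ := (2 ^ s) ^ 2 * (8 * A) with hK
  have hK0 : 0 ≤ K := by positivity
  refine ⟨K ^ (1 / 2 : ℝ) + 1, by positivity, fun f g => ?_⟩
  have iG := aux_schwartz_int s (𝓕 g)
  have iFG := aux_schwartz_int s (𝓕 (SchwartzMap.pairing (ContinuousLinearMap.mul ℂ ℂ) f g))
  have iF1 := aux_schwartz_int (s + 1) (𝓕 f)
  have eFG : ⇑(SchwartzMap.pairing (ContinuousLinearMap.mul ℂ ℂ) f g) = fun x => f x * g x := by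
    ext x
    simp only [SchwartzMap.pairing_apply_apply, ContinuousLinearMap.mul_apply']
  simp only [SchwartzMap.fourier_coe] at iG iFG iF1
  rw [eFG] at iFG
  have mf : Measurable (𝓕 (⇑f)) := by
    rw [← SchwartzMap.fourier_coe]; exact (𝓕 f).continuous.measurable
  have mg : Measurable (𝓕 (⇑g)) := by
    rw [← SchwartzMap.fourier_coe]; exact (𝓕 g).continuous.measurable
  have iF : Integrable fun ξ : EuclideanSpace ℝ (Fin n) =>
      ‖ξ‖ ^ 2 * (1 + ‖ξ‖ ^ 2) ^ s * ‖𝓕 (⇑f) ξ‖ ^ 2 := by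
    refine iF1.mono' (Measurable.aestronglyMeasurable (by fun_prop)) ?_
    filter_upwards with x
    rw [Real.norm_of_nonneg (by positivity), Real.rpow_add (by positivity), Real.rpow_one,
      mul_comm (‖x‖ ^ 2)]
    gcongr
    linarith
  have key : (∫ ξ : EuclideanSpace ℝ (Fin n), (1 + ‖ξ‖ ^ 2) ^ s * ‖𝓕 (fun x => f x * g x) ξ‖ ^ 2) ≤
      K * (∫ ξ : EuclideanSpace ℝ (Fin n), ‖ξ‖ ^ 2 * (1 + ‖ξ‖ ^ 2) ^ s * ‖𝓕 (⇑f) ξ‖ ^ 2) *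
        ∫ ξ : EuclideanSpace ℝ (Fin n), (1 + ‖ξ‖ ^ 2) ^ s * ‖𝓕 (⇑g) ξ‖ ^ 2 := by
    have pF : 0 ≤ ∫ ξ : EuclideanSpace ℝ (Fin n),
        ‖ξ‖ ^ 2 * (1 + ‖ξ‖ ^ 2) ^ s * ‖𝓕 (⇑f) ξ‖ ^ 2 := integral_nonneg fun x => by positivity
    have pG : 0 ≤ ∫ ξ : EuclideanSpace ℝ (Fin n),
        (1 + ‖ξ‖ ^ 2) ^ s * ‖𝓕 (⇑g) ξ‖ ^ 2 := integral_nonneg fun x => by positivity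
    rw [← ENNReal.ofReal_le_ofReal_iff (by positivity), ENNReal.ofReal_mul (by positivity),
      ENNReal.ofReal_mul (by positivity), hK, ENNReal.ofReal_mul (by positivity),
      ENNReal.ofReal_mul (by positivity), hA,
      ofReal_integral_eq_lintegral_ofReal iF (.of_forall fun x => by positivity),
      ofReal_integral_eq_lintegral_ofReal iG (.of_forall fun x => by positivity),
      ofReal_integral_eq_lintegral_ofReal iFG (.of_forall fun x => by positivity),
      ofReal_integral_eq_lintegral_ofReal (auxk_int hn s hs) (.of_forall fun x => by positivity)]
    have mW := auxW_meas (n := n) s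
    have mk := auxk_meas (n := n) s
    have Y := aux_sum_young (n := n) (κ := fun x => ENNReal.ofReal (auxk s x))
      (F := fun x => ENNReal.ofReal (‖x‖ * auxW s x * ‖𝓕 (⇑f) x‖))
      (G := fun x => ENNReal.ofReal (auxW s x * ‖𝓕 (⇑g) x‖)) (by fun_prop) (by fun_prop)
      (by fun_prop)
    have e1 : ∀ x : EuclideanSpace ℝ (Fin n), ENNReal.ofReal (auxk s x) ^ 2 =
        ENNReal.ofReal (auxk s x ^ 2) := fun x => (ENNReal.ofReal_pow (auxk_nonneg s x) 2).symm
    have e2 : ∀ x : EuclideanSpace ℝ (Fin n),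
        ENNReal.ofReal (‖x‖ * auxW s x * ‖𝓕 (⇑f) x‖) ^ 2 =
        ENNReal.ofReal (‖x‖ ^ 2 * (1 + ‖x‖ ^ 2) ^ s * ‖𝓕 (⇑f) x‖ ^ 2) := fun x => by
      have := auxW_pos s x
      rw [← ENNReal.ofReal_pow (by positivity), mul_pow, mul_pow, auxW_sq]
    have e3 : ∀ (h : EuclideanSpace ℝ (Fin n) → ℂ) (x : EuclideanSpace ℝ (Fin n)),
        ENNReal.ofReal (auxW s x * ‖h x‖) ^ 2 =
        ENNReal.ofReal ((1 + ‖x‖ ^ 2) ^ s * ‖h x‖ ^ 2) := fun h x => by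
      have := auxW_pos s x
      rw [← ENNReal.ofReal_pow (by positivity), mul_pow, auxW_sq]
    simp only [e1, e2, e3 (𝓕 (⇑g))] at Y
    simp only [← e3 (𝓕 (fun x => f x * g x))]
    calc _ ≤ _ := lintegral_mono fun ξ => pow_le_pow_left' (aux_main hn s hs0 f g ξ) 2
      _ ≤ _ := by
        simp only [mul_pow]
        rw [lintegral_const_mul' _ _ (by simp)]
        refine (mul_le_mul_right Y _).trans (le_of_eq ?_)
        rw [ENNReal.ofReal_pow (by positivity)]
        simp only [ENNReal.ofReal_ofNat]
        ring
  unfold HsNorm XNorm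
  have pF : 0 ≤ ∫ ξ : EuclideanSpace ℝ (Fin n),
      ‖ξ‖ ^ 2 * (1 + ‖ξ‖ ^ 2) ^ s * ‖𝓕 (⇑f) ξ‖ ^ 2 := integral_nonneg fun x => by positivity
  have pG : 0 ≤ ∫ ξ : EuclideanSpace ℝ (Fin n),
      (1 + ‖ξ‖ ^ 2) ^ s * ‖𝓕 (⇑g) ξ‖ ^ 2 := integral_nonneg fun x => by positivity
  calc _ ≤ _ := Real.rpow_le_rpow (integral_nonneg fun x => by positivity) key (by norm_num)
    _ = _ := by rw [Real.mul_rpow (by positivity) pG, Real.mul_rpow hK0 pF]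
    _ ≤ _ := by gcongr; linarith
end
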